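/- arXiv:2202.06647 — 9 statements merged into one kernel-verified Lean document; each statement's English description precedes it below -/
import Mathlib

section
/- Let (H_X, H_Z) be a CSS code with parameters (n, r_X, r_Z) admitting a ZX-duality (τ_n, τ_X, τ_Z). Then the direct sum code C ⊕ C admits a ZX-duality whose qubit bijection on Fin n ⊕ Fin n has no fixed points; concretely, the bijection sending Sum.inl j ↦ Sum.inr (τ_n j) and Sum.inr j ↦ Sum.inl (τ_n j) is fixed-point free and extends (with suitable bijections on the check index sets) to a ZX-duality of C ⊕ C. -/
/-- A CSS code: `H_X * H_Zᵀ = 0`. -/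
def IsCSS {q rX rZ : Type*} [Fintype q] (HX : Matrix rX q (ZMod 2)) (HZ : Matrix rZ q (ZMod 2)) : Prop :=
  HX * HZ.transpose = 0

/-- A ZX-duality of a CSS code `(H_X, H_Z)` with qubit index type `q`
and check index types `rX`, `rZ`. -/
def IsZXDuality {q rX rZ : Type*} (HX : Matrix rX q (ZMod 2)) (HZ : Matrix rZ q (ZMod 2))
    (τn : q ≃ q) (τX : rX ≃ rZ) (τZ : rZ ≃ rX) : Prop :=
  (∀ i j, HZ (τX i) (τn j) = HX i j) ∧ (∀ i j, HX (τZ i) (τn j) = HZ i j)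

theorem swap_sumMap_ne {α β : Type*} (f : α → β) (g : β → α) (x : α ⊕ β) :
    (Sum.map f g x).swap ≠ x := by
  cases x <;> exact nofun

theorem fromBlocks_submatrix_swap_sumMap {l l' m m' n n' o o' R : Type*}
    (A : Matrix m' n' R) (B : Matrix m' n R) (C : Matrix m n' R) (D : Matrix m n R)
    (r : l → m) (r' : l' → m') (c : o → n) (c' : o' → n') :
    (Matrix.fromBlocks A B C D).submatrix (Sum.swap ∘ Sum.map r r') (Sum.swap ∘ Sum.map c c') =
      Matrix.fromBlocks (D.submatrix r c) (C.submatrix r c')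
        (B.submatrix r' c) (A.submatrix r' c') := by
  ext (i | i) (j | j) <;> rfl

section ZXDuality

variable {q rX rZ : Type*} {HX : Matrix rX q (ZMod 2)} {HZ : Matrix rZ q (ZMod 2)}
  {τn : q ≃ q} {τX : rX ≃ rZ} {τZ : rZ ≃ rX}

theorem isZXDuality_iff_submatrix_eq :
    IsZXDuality HX HZ τn τX τZ ↔ HZ.submatrix τX τn = HX ∧ HX.submatrix τZ τn = HZ := by
  simp only [IsZXDuality, ← Matrix.ext_iff, Matrix.submatrix_apply]

theorem IsZXDuality.directSum_swap (hτ : IsZXDuality HX HZ τn τX τZ) :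
    IsZXDuality (Matrix.fromBlocks HX 0 0 HX) (Matrix.fromBlocks HZ 0 0 HZ)
      ((Equiv.sumCongr τn τn).trans (Equiv.sumComm q q))
      ((Equiv.sumCongr τX τX).trans (Equiv.sumComm rZ rZ))
      ((Equiv.sumCongr τZ τZ).trans (Equiv.sumComm rX rX)) := by
  obtain ⟨hX, hZ⟩ := isZXDuality_iff_submatrix_eq.mp hτ
  refine isZXDuality_iff_submatrix_eq.mpr ⟨?_, ?_⟩
  · exact (fromBlocks_submatrix_swap_sumMap HZ 0 0 HZ τX τX τn τn).trans (by simp [hX])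
  · exact (fromBlocks_submatrix_swap_sumMap HX 0 0 HX τZ τZ τn τn).trans (by simp [hZ])

theorem directSum_zxDuality_fixedPointFree_general (hτ : IsZXDuality HX HZ τn τX τZ) :
    (∀ j : q ⊕ q, ((Equiv.sumCongr τn τn).trans (Equiv.sumComm q q)) j ≠ j) ∧
    ∃ (τX₂ : rX ⊕ rX ≃ rZ ⊕ rZ) (τZ₂ : rZ ⊕ rZ ≃ rX ⊕ rX),
      IsZXDuality (Matrix.fromBlocks HX 0 0 HX) (Matrix.fromBlocks HZ 0 0 HZ)
        ((Equiv.sumCongr τn τn).trans (Equiv.sumComm q q)) τX₂ τZ₂ :=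
  ⟨swap_sumMap_ne τn τn, _, _, hτ.directSum_swap⟩

end ZXDuality

/-- If a CSS code `C = (H_X, H_Z)` admits a ZX-duality `(τ_n, τ_X, τ_Z)`, then the direct
sum code `C ⊕ C` admits a ZX-duality whose qubit bijection
`Sum.inl j ↦ Sum.inr (τ_n j)`, `Sum.inr j ↦ Sum.inl (τ_n j)` has no fixed points. -/
theorem directSum_zxDuality_fixedPointFree {n rX rZ : ℕ}
    (HX : Matrix (Fin rX) (Fin n) (ZMod 2)) (HZ : Matrix (Fin rZ) (Fin n) (ZMod 2))
    (hCSS : IsCSS HX HZ)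
    (τn : Fin n ≃ Fin n) (τX : Fin rX ≃ Fin rZ) (τZ : Fin rZ ≃ Fin rX)
    (hτ : IsZXDuality HX HZ τn τX τZ) :
    (∀ j : Fin n ⊕ Fin n, ((Equiv.sumCongr τn τn).trans (Equiv.sumComm (Fin n) (Fin n))) j ≠ j) ∧
    ∃ (τX₂ : Fin rX ⊕ Fin rX ≃ Fin rZ ⊕ Fin rZ) (τZ₂ : Fin rZ ⊕ Fin rZ ≃ Fin rX ⊕ Fin rX),
      IsZXDuality (Matrix.fromBlocks HX 0 0 HX) (Matrix.fromBlocks HZ 0 0 HZ)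
        ((Equiv.sumCongr τn τn).trans (Equiv.sumComm (Fin n) (Fin n))) τX₂ τZ₂ :=
  directSum_zxDuality_fixedPointFree_general hτ
end

section
/- Let R₅,₅ be the presented group on generators a, b, c with relations a², b², c², (ab)⁵, (ac)², (bc)⁵, and let R₅,₄ be the presented group on generators d, e, f with relations d², e², f², (de)⁵, (df)², (ef)⁴. Then there exists an injective group homomorphism ψ : R₅,₅ → R₅,₄ with ψ(a) = e, ψ(b) = d, ψ(c) = f·e·f, and for every x ∈ R₅,₅ one has ψ(φ(x)) = f · ψ(x) · f, where φ is the automorphism of R₅,₅ swapping a and c and fixing b. -/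
namespace Stmt5

/-- Free-group generators (used as `a, b, c` for `R₅,₅` and `d, e, f` for `R₅,₄`). -/
def g0 : FreeGroup (Fin 3) := FreeGroup.of 0
def g1 : FreeGroup (Fin 3) := FreeGroup.of 1
def g2 : FreeGroup (Fin 3) := FreeGroup.of 2

/-- Relators of `R₅,₅ = ⟨a, b, c | a², b², c², (ab)⁵, (ac)², (bc)⁵⟩`,
with `a = g0`, `b = g1`, `c = g2`. -/
def rels55 : Set (FreeGroup (Fin 3)) :=
  {g0 ^ 2, g1 ^ 2, g2 ^ 2, (g0 * g1) ^ 5, (g0 * g2) ^ 2, (g1 * g2) ^ 5}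

/-- Relators of `R₅,₄ = ⟨d, e, f | d², e², f², (de)⁵, (df)², (ef)⁴⟩`,
with `d = g0`, `e = g1`, `f = g2`. -/
def rels54 : Set (FreeGroup (Fin 3)) :=
  {g0 ^ 2, g1 ^ 2, g2 ^ 2, (g0 * g1) ^ 5, (g0 * g2) ^ 2, (g1 * g2) ^ 4}

abbrev R55 := PresentedGroup rels55
abbrev R54 := PresentedGroup rels54

/-- `a`, `b`, `c` in `R₅,₅`. -/
def a : R55 := PresentedGroup.of 0
def b : R55 := PresentedGroup.of 1
def c : R55 := PresentedGroup.of 2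

/-- `d`, `e`, `f` in `R₅,₄`. -/
def d : R54 := PresentedGroup.of 0
def e : R54 := PresentedGroup.of 1
def f : R54 := PresentedGroup.of 2

/-!
The reflections `a`, `b`, `c` in the sides of a triangle whose base `b` makes the same angle with
both legs are permuted by the symmetry of the triangle, which swaps `a` and `c`. Cutting the
triangle along its axis gives a right triangle with sides `b`, `a` and the axis, in which the apex
angle `π / n` has become `π / (2 * n)`; the reflection `f` in the axis commutes with `b` and
conjugates `a` to `c`. Algebraically, this says that the bisected group is the semidirect product of
the original one with the symmetry; mapping back into a semidirect product gives injectivity.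
-/

section Involutions

variable {G : Type*}

theorem mul_pow_eq_one_comm [Group G] {x y : G} {n : ℕ} : (x * y) ^ n = 1 ↔ (y * x) ^ n = 1 := by
  rw [← mul_eq_right (b := x), mul_pow_mul, mul_eq_left]

theorem mul_conj_pow [Monoid G] (y z : G) (n : ℕ) :
    (y * (z * y * z)) ^ n = (y * z) ^ (2 * n) := by
  rw [pow_mul, sq, mul_assoc, mul_assoc]

theorem inv_eq_self_of_sq_eq_one [Group G] {z : G} (hz : z ^ 2 = 1) : z⁻¹ = z :=
  inv_eq_of_mul_eq_one_left (sq z ▸ hz)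

theorem conj_conj_of_sq_eq_one [Monoid G] {z : G} (hz : z ^ 2 = 1) (w : G) :
    z * (z * w * z) * z = w := by
  rw [sq] at hz
  rw [mul_assoc z w z, ← mul_assoc z z, hz, one_mul, mul_assoc, hz, mul_one]

theorem conj_pow_eq_one_iff [Group G] {z : G} (hz : z ^ 2 = 1) {w : G} {n : ℕ} :
    (z * w * z) ^ n = 1 ↔ w ^ n = 1 := by
  rw [← conj_eq_one_iff (a := z) (b := w ^ n), ← conj_pow, inv_eq_self_of_sq_eq_one hz]

theorem mul_sq_eq_one_iff_conj_eq [Group G] {x z : G} (hx : x ^ 2 = 1) :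
    (x * z) ^ 2 = 1 ↔ z * x * z = x := by
  rw [sq, mul_assoc, ← mul_assoc z, mul_eq_one_iff_eq_inv', inv_eq_self_of_sq_eq_one hx]

theorem mul_conj_eq_conj_mul [Monoid G] {x z : G} (hz : z ^ 2 = 1) (hx : z * x * z = x) (y : G) :
    x * (z * y * z) = z * (x * y) * z := by
  calc x * (z * y * z) = z * x * z * (z * y * z) := by rw [hx]
    _ = z * x * z ^ 2 * y * z := by simp only [sq, mul_assoc]
    _ = z * (x * y) * z := by rw [hz, mul_one, mul_assoc z]

end Involutions

section Holomorph

open SemidirectProduct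

/-- The holomorph `G ⋊ Aut G`. It serves to realize an automorphism of `G` as a conjugation. -/
abbrev Holomorph (G : Type*) [Group G] := G ⋊[MonoidHom.id (MulAut G)] MulAut G

variable {G : Type*} [Group G]

theorem inr_mul_inl_mul_inr {σ : MulAut G} (hσ : σ ^ 2 = 1) (w : G) :
    (inr σ * inl w * inr σ : Holomorph G) = inl (σ w) := by
  have h := inl_aut (φ := MonoidHom.id (MulAut G)) σ w
  rw [inv_eq_self_of_sq_eq_one hσ] at h
  exact h.symm

end Holomorph

/-- The relations between the reflections `x`, `y`, `z` in the sides of a triangle whose sides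
`x, y` meet at the angle `π / p`, `x, z` at `π / q` and `y, z` at `π / r`. The exponent `0` stands
for the absence of a relation. -/
structure IsReflectionTriple {G : Type*} [Group G] (p q r : ℕ) (x y z : G) : Prop where
  sq_fst : x ^ 2 = 1
  sq_snd : y ^ 2 = 1
  sq_trd : z ^ 2 = 1
  fst_mul_snd_pow : (x * y) ^ p = 1
  fst_mul_trd_pow : (x * z) ^ q = 1
  snd_mul_trd_pow : (y * z) ^ r = 1

namespace IsReflectionTriple

variable {G H : Type*} [Group G] [Group H] {p q r m n : ℕ} {x y z : G}

theorem reverse (h : IsReflectionTriple p q r x y z) : IsReflectionTriple r q p z y x where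
  sq_fst := h.sq_trd
  sq_snd := h.sq_snd
  sq_trd := h.sq_fst
  fst_mul_snd_pow := mul_pow_eq_one_comm.1 h.snd_mul_trd_pow
  fst_mul_trd_pow := mul_pow_eq_one_comm.1 h.fst_mul_trd_pow
  snd_mul_trd_pow := mul_pow_eq_one_comm.1 h.fst_mul_snd_pow

theorem map (h : IsReflectionTriple p q r x y z) (F : G →* H) :
    IsReflectionTriple p q r (F x) (F y) (F z) where
  sq_fst := by rw [← map_pow, h.sq_fst, map_one]
  sq_snd := by rw [← map_pow, h.sq_snd, map_one]
  sq_trd := by rw [← map_pow, h.sq_trd, map_one]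
  fst_mul_snd_pow := by rw [← map_mul, ← map_pow, h.fst_mul_snd_pow, map_one]
  fst_mul_trd_pow := by rw [← map_mul, ← map_pow, h.fst_mul_trd_pow, map_one]
  snd_mul_trd_pow := by rw [← map_mul, ← map_pow, h.snd_mul_trd_pow, map_one]

theorem conj_fst_eq (h : IsReflectionTriple p 2 r x y z) : z * x * z = x :=
  (mul_sq_eq_one_iff_conj_eq h.sq_fst).1 h.fst_mul_trd_pow

/-- Geometrically, a right triangle is glued to its mirror image in its leg `z`. -/
theorem double (h : IsReflectionTriple m 2 (2 * n) x y z) :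
    IsReflectionTriple m n m y x (z * y * z) where
  sq_fst := h.sq_snd
  sq_snd := h.sq_fst
  sq_trd := (conj_pow_eq_one_iff h.sq_trd).2 h.sq_snd
  fst_mul_snd_pow := mul_pow_eq_one_comm.1 h.fst_mul_snd_pow
  fst_mul_trd_pow := (mul_conj_pow y z n).trans h.snd_mul_trd_pow
  snd_mul_trd_pow := by
    rw [mul_conj_eq_conj_mul h.sq_trd h.conj_fst_eq, conj_pow_eq_one_iff h.sq_trd]
    exact h.fst_mul_snd_pow

theorem bisect (h : IsReflectionTriple m n m y x (z * y * z)) (hz : z ^ 2 = 1)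
    (hx : z * x * z = x) : IsReflectionTriple m 2 (2 * n) x y z where
  sq_fst := h.sq_snd
  sq_snd := h.sq_fst
  sq_trd := hz
  fst_mul_snd_pow := mul_pow_eq_one_comm.1 h.fst_mul_snd_pow
  fst_mul_trd_pow := (mul_sq_eq_one_iff_conj_eq h.sq_snd).2 hx
  snd_mul_trd_pow := (mul_conj_pow y z n).symm.trans h.fst_mul_trd_pow

end IsReflectionTriple

/-- The relators of the Coxeter group of a triangle, the words that `IsReflectionTriple p q r`
requires to be trivial. Both `rels55` and `rels54` unfold to instances of this set. -/
def triangleRels (p q r : ℕ) : Set (FreeGroup (Fin 3)) :=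
  {g0 ^ 2, g1 ^ 2, g2 ^ 2, (g0 * g1) ^ p, (g0 * g2) ^ q, (g1 * g2) ^ r}

/-- The Coxeter group generated by the reflections in the sides of a triangle with angles
`π / p`, `π / q`, `π / r`, the universal group containing an `IsReflectionTriple p q r`. -/
abbrev TriangleGroup (p q r : ℕ) := PresentedGroup (triangleRels p q r)

namespace TriangleGroup

variable {G : Type*} [Group G] {p q r m n : ℕ} {x y z : G}

/-- The generating reflections of a triangle group, indexed as in `triangleRels`. -/
def reflection (i : Fin 3) : TriangleGroup p q r := PresentedGroup.of i

theorem isReflectionTriple_reflection (p q r : ℕ) :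
    IsReflectionTriple p q r
      (reflection 0 : TriangleGroup p q r) (reflection 1) (reflection 2) := by
  have mk_eq_one {w : FreeGroup (Fin 3)} (hw : w ∈ triangleRels p q r) :
      PresentedGroup.mk (triangleRels p q r) w = 1 := PresentedGroup.one_of_mem hw
  constructor <;> exact mk_eq_one (by simp [triangleRels, g0, g1, g2])

theorem lift_eq_one_of_mem_triangleRels (h : IsReflectionTriple p q r x y z)
    {w : FreeGroup (Fin 3)} (hw : w ∈ triangleRels p q r) : FreeGroup.lift ![x, y, z] w = 1 := by
  rcases hw with rfl | rfl | rfl | rfl | rfl | rfl <;>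
    simp only [g0, g1, g2, map_pow, map_mul, FreeGroup.lift_apply_of]
  exacts [h.sq_fst, h.sq_snd, h.sq_trd, h.fst_mul_snd_pow, h.fst_mul_trd_pow, h.snd_mul_trd_pow]

/-- The universal property of the triangle group: the homomorphism sending its three reflections
to a given reflection triple. -/
def lift (h : IsReflectionTriple p q r x y z) : TriangleGroup p q r →* G :=
  PresentedGroup.toGroup fun _ hw => lift_eq_one_of_mem_triangleRels h hw

@[simp]
theorem lift_reflection (h : IsReflectionTriple p q r x y z) (i : Fin 3) :
    lift h (reflection i) = ![x, y, z] i :=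
  PresentedGroup.toGroup.of _

theorem hom_ext {F₁ F₂ : TriangleGroup p q r →* G} (h₀ : F₁ (reflection 0) = F₂ (reflection 0))
    (h₁ : F₁ (reflection 1) = F₂ (reflection 1)) (h₂ : F₁ (reflection 2) = F₂ (reflection 2)) :
    F₁ = F₂ :=
  PresentedGroup.ext fun i => by fin_cases i <;> assumption

/-- The homomorphism swapping the outer two reflections, hence the angles `π / p` and `π / r`. -/
def reverseHom (p q r : ℕ) : TriangleGroup p q r →* TriangleGroup r q p :=
  lift (isReflectionTriple_reflection r q p).reverse

theorem reverseHom_comp_reverseHom :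
    (reverseHom r q p).comp (reverseHom p q r) = MonoidHom.id _ := by
  apply hom_ext <;> simp [reverseHom]

/-- The isomorphism swapping the outer two reflections; for `p = r` it is the automorphism induced
by the symmetry of the triangle. -/
def reverse (p q r : ℕ) : TriangleGroup p q r ≃* TriangleGroup r q p :=
  (reverseHom p q r).toMulEquiv (reverseHom r q p) reverseHom_comp_reverseHom
    reverseHom_comp_reverseHom

@[simp]
theorem reverse_reflection_zero : reverse p q r (reflection 0) = reflection 2 :=
  lift_reflection (isReflectionTriple_reflection r q p).reverse 0

@[simp]
theorem reverse_reflection_one : reverse p q r (reflection 1) = reflection 1 :=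
  lift_reflection (isReflectionTriple_reflection r q p).reverse 1

@[simp]
theorem reverse_reflection_two : reverse p q r (reflection 2) = reflection 0 :=
  lift_reflection (isReflectionTriple_reflection r q p).reverse 2

theorem reverse_sq : (reverse m n m : MulAut (TriangleGroup m n m)) ^ 2 = 1 :=
  MulEquiv.ext fun w => DFunLike.congr_fun reverseHom_comp_reverseHom w

/-- The inclusion of the group of a symmetric triangle into the group of its half, which contains
in addition the reflection `reflection 2` in the axis of symmetry. -/
def toBisected (m n : ℕ) : TriangleGroup m n m →* TriangleGroup m 2 (2 * n) :=
  lift (isReflectionTriple_reflection m 2 (2 * n)).double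

@[simp]
theorem toBisected_reflection_zero : toBisected m n (reflection 0) = reflection 1 :=
  lift_reflection _ 0

@[simp]
theorem toBisected_reflection_one : toBisected m n (reflection 1) = reflection 0 :=
  lift_reflection _ 1

@[simp]
theorem toBisected_reflection_two :
    toBisected m n (reflection 2) = reflection 2 * reflection 1 * reflection 2 :=
  lift_reflection _ 2

theorem toBisected_reverse (w : TriangleGroup m n m) :
    toBisected m n (reverse m n m w) = reflection 2 * toBisected m n w * reflection 2 := by
  have half := isReflectionTriple_reflection m 2 (2 * n)
  suffices (toBisected m n).comp (reverse m n m).toMonoidHom =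
      (MulAut.conj (reflection 2)).toMonoidHom.comp (toBisected m n) by
    simpa [inv_eq_self_of_sq_eq_one half.sq_trd] using DFunLike.congr_fun this w
  apply hom_ext <;>
    simp [inv_eq_self_of_sq_eq_one half.sq_trd, half.conj_fst_eq,
      conj_conj_of_sq_eq_one half.sq_trd]

open SemidirectProduct

theorem isReflectionTriple_holomorph :
    IsReflectionTriple m 2 (2 * n)
      (inl (reflection 1) : Holomorph (TriangleGroup m n m))
      (inl (reflection 0)) (inr (reverse m n m)) := by
  apply IsReflectionTriple.bisect
  · rw [inr_mul_inl_mul_inr reverse_sq, reverse_reflection_zero]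
    exact (isReflectionTriple_reflection m n m).map inl
  · rw [← map_pow, reverse_sq, map_one]
  · rw [inr_mul_inl_mul_inr reverse_sq, reverse_reflection_one]

/-- The homomorphism letting the axis of a symmetric triangle act as the symmetry of the triangle;
it is a left inverse of `toBisected` up to the inclusion into the holomorph. -/
def bisectedToHolomorph (m n : ℕ) :
    TriangleGroup m 2 (2 * n) →* Holomorph (TriangleGroup m n m) :=
  lift isReflectionTriple_holomorph

theorem bisectedToHolomorph_comp_toBisected :
    (bisectedToHolomorph m n).comp (toBisected m n) = inl := by
  apply hom_ext <;> simp [bisectedToHolomorph, inr_mul_inl_mul_inr reverse_sq]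

theorem toBisected_injective : Function.Injective (toBisected m n) := by
  have h : Function.Injective ((bisectedToHolomorph m n).comp (toBisected m n)) :=
    bisectedToHolomorph_comp_toBisected ▸ inl_injective
  exact Function.Injective.of_comp h

end TriangleGroup

open TriangleGroup in
theorem exists_injective_hom_R55_to_R54_general (m n : ℕ) :
    ∃ (ψ : TriangleGroup m n m →* TriangleGroup m 2 (2 * n))
      (φ : TriangleGroup m n m ≃* TriangleGroup m n m),
      Function.Injective ψ ∧
      ψ (reflection 0) = reflection 1 ∧ ψ (reflection 1) = reflection 0 ∧
      ψ (reflection 2) = reflection 2 * reflection 1 * reflection 2 ∧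
      φ (reflection 0) = reflection 2 ∧ φ (reflection 1) = reflection 1 ∧
      φ (reflection 2) = reflection 0 ∧
      ∀ w, ψ (φ w) = reflection 2 * ψ w * reflection 2 :=
  ⟨toBisected m n, reverse m n m, toBisected_injective, toBisected_reflection_zero,
    toBisected_reflection_one, toBisected_reflection_two, reverse_reflection_zero,
    reverse_reflection_one, reverse_reflection_two, toBisected_reverse⟩

/-- There is an injective group homomorphism `ψ : R₅,₅ → R₅,₄` with
`ψ(a) = e`, `ψ(b) = d`, `ψ(c) = f·e·f`, intertwining the automorphism `φ` of `R₅,₅`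
(which swaps `a` and `c` and fixes `b`) with conjugation by `f`. -/
theorem exists_injective_hom_R55_to_R54 :
    ∃ (ψ : R55 →* R54) (φ : R55 ≃* R55),
      Function.Injective ψ ∧
      ψ a = e ∧ ψ b = d ∧ ψ c = f * e * f ∧
      φ a = c ∧ φ b = b ∧ φ c = a ∧
      ∀ x : R55, ψ (φ x) = f * ψ x * f := by
  exact exists_injective_hom_R55_to_R54_general 5 2

end Stmt5
end

section
/- For every natural number l ≥ 3, let R_{l,l} be the presented group on generators a, b, c with relations a², b², c², (ab)^l, (ac)², (bc)^l, and let R_{l,4} be the presented group on generators d, e, f with relations d², e², f², (de)^l, (df)², (ef)⁴. Then there exists an injective group homomorphism R_{l,l} → R_{l,4} sending a ↦ e, b ↦ d, c ↦ f·e·f. -/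
namespace Stmt6

/-- Free-group generators. -/
def g0 : FreeGroup (Fin 3) := FreeGroup.of 0
def g1 : FreeGroup (Fin 3) := FreeGroup.of 1
def g2 : FreeGroup (Fin 3) := FreeGroup.of 2

/-- Relators of `R_{l,l} = ⟨a, b, c | a², b², c², (ab)^l, (ac)², (bc)^l⟩`,
with `a = g0`, `b = g1`, `c = g2`. -/
def relsLL (l : ℕ) : Set (FreeGroup (Fin 3)) :=
  {g0 ^ 2, g1 ^ 2, g2 ^ 2, (g0 * g1) ^ l, (g0 * g2) ^ 2, (g1 * g2) ^ l}

/-- Relators of `R_{l,4} = ⟨d, e, f | d², e², f², (de)^l, (df)², (ef)⁴⟩`,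
with `d = g0`, `e = g1`, `f = g2`. -/
def relsL4 (l : ℕ) : Set (FreeGroup (Fin 3)) :=
  {g0 ^ 2, g1 ^ 2, g2 ^ 2, (g0 * g1) ^ l, (g0 * g2) ^ 2, (g1 * g2) ^ 4}

/-!
Both groups are generated by three involutions, and `R_{l,l}` has the symmetry `σ` exchanging `a`
and `c` and fixing `b`. In the semidirect product of `R_{l,l}` with its automorphism group, the
elements `b`, `a`, `σ` satisfy the relations of `d`, `e`, `f`: `σ` commutes with `b`, and
`(aσ)² = a · σ(a) = ac`, so that `(aσ)⁴ = (ac)² = 1`. The resulting map from `R_{l,4}` sends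
`e`, `d`, `fef` to `a`, `b`, `σaσ = c`, so it is a left inverse, up to the inclusion of `R_{l,l}`,
of the map in question. The argument works for any exponent `m` of `ac`, with `ef` of exponent `2m`.
-/

section Group

variable {G : Type*} [Group G] {x y : G}

theorem mul_pow_eq_one_swap {n : ℕ} (h : (x * y) ^ n = 1) : (y * x) ^ n = 1 := by
  have hconj := mul_pow_mul x y n
  rw [h, one_mul] at hconj
  exact left_eq_mul.mp hconj

theorem inv_eq_self_of_sq_eq_one (h : x ^ 2 = 1) : x⁻¹ = x :=
  inv_eq_of_mul_eq_one_right (by rw [← sq, h])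

theorem commute_of_sq_eq_one (hx : x ^ 2 = 1) (hy : y ^ 2 = 1) (hxy : (x * y) ^ 2 = 1) :
    Commute x y :=
  calc x * y = (x * y)⁻¹ := (inv_eq_self_of_sq_eq_one hxy).symm
    _ = y * x := by
      rw [mul_inv_rev, inv_eq_self_of_sq_eq_one hx, inv_eq_self_of_sq_eq_one hy]

end Group

section SemidirectProduct

open SemidirectProduct (inl inr)

variable {N G : Type*} [Group N] [Group G] {φ : G →* MulAut N} {s : G}

theorem inr_mul_inl_mul_inr (hs : s ^ 2 = 1) (n : N) :
    (inr s * inl n * inr s : N ⋊[φ] G) = inl (φ s n) := by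
  rw [SemidirectProduct.inl_aut, inv_eq_self_of_sq_eq_one hs]

theorem inl_mul_inr_sq (hs : s ^ 2 = 1) (n : N) :
    (inl n * inr s : N ⋊[φ] G) ^ 2 = inl (n * φ s n) := by
  rw [map_mul, ← inr_mul_inl_mul_inr hs]
  simp only [sq, mul_assoc]

end SemidirectProduct

/-- The elements `a`, `b`, `c` satisfy the defining relations of the reflection group whose
products of generators `ab`, `ac`, `bc` have exponents `p`, `q`, `r`. An exponent `0` imposes no
relation, so it stands for `∞`. -/
structure TriangleRelations {G : Type*} [Group G] (p q r : ℕ) (a b c : G) : Prop where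
  sq_fst : a ^ 2 = 1
  sq_snd : b ^ 2 = 1
  sq_trd : c ^ 2 = 1
  fst_mul_snd : (a * b) ^ p = 1
  fst_mul_trd : (a * c) ^ q = 1
  snd_mul_trd : (b * c) ^ r = 1

namespace TriangleRelations

variable {G N : Type*} [Group G] [Group N] {p q r l m : ℕ}

theorem reverse {a b c : G} (h : TriangleRelations p q r a b c) :
    TriangleRelations r q p c b a where
  sq_fst := h.sq_trd
  sq_snd := h.sq_snd
  sq_trd := h.sq_fst
  fst_mul_snd := mul_pow_eq_one_swap h.snd_mul_trd
  fst_mul_trd := mul_pow_eq_one_swap h.fst_mul_trd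
  snd_mul_trd := mul_pow_eq_one_swap h.fst_mul_snd

theorem snd_fst_conj {d e f : G} (h : TriangleRelations l 2 (2 * m) d e f) :
    TriangleRelations l m l e d (f * e * f) := by
  have f_inv : f⁻¹ = f := inv_eq_self_of_sq_eq_one h.sq_trd
  have d_comm_f : Commute d f := commute_of_sq_eq_one h.sq_fst h.sq_trd h.fst_mul_trd
  refine ⟨h.sq_snd, h.sq_fst, ?_, mul_pow_eq_one_swap h.fst_mul_snd, ?_, ?_⟩
  · calc (f * e * f) ^ 2 = (f * e * f⁻¹) ^ 2 := by rw [f_inv]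
      _ = 1 := by rw [conj_pow, h.sq_snd, mul_one, mul_inv_cancel]
  · calc (e * (f * e * f)) ^ m = ((e * f) ^ 2) ^ m := by simp only [sq, mul_assoc]
      _ = 1 := by rw [← pow_mul, h.snd_mul_trd]
  · calc (d * (f * e * f)) ^ l = (f * (d * e) * f⁻¹) ^ l := by
          rw [f_inv, ← mul_assoc, ← mul_assoc, d_comm_f.eq, mul_assoc f d e]
      _ = 1 := by rw [conj_pow, h.fst_mul_snd, mul_one, mul_inv_cancel]

theorem semidirectProduct {a b c : N} (h : TriangleRelations l m l a b c) {φ : G →* MulAut N}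
    {s : G} (hs : s ^ 2 = 1) (hsa : φ s a = c) (hsb : φ s b = b) :
    TriangleRelations l 2 (2 * m) (SemidirectProduct.inl b : N ⋊[φ] G)
      (SemidirectProduct.inl a) (SemidirectProduct.inr s) where
  sq_fst := by rw [← map_pow, h.sq_snd, map_one]
  sq_snd := by rw [← map_pow, h.sq_fst, map_one]
  sq_trd := by rw [← map_pow, hs, map_one]
  fst_mul_snd := by rw [← map_mul, ← map_pow, mul_pow_eq_one_swap h.fst_mul_snd, map_one]
  fst_mul_trd := by rw [inl_mul_inr_sq hs, hsb, ← sq, h.sq_snd, map_one]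
  snd_mul_trd := by rw [pow_mul, inl_mul_inr_sq hs, hsa, ← map_pow, h.fst_mul_trd, map_one]

end TriangleRelations

/-- The relators expressing `TriangleRelations p q r` for the three free generators. The sets
`relsLL l` and `relsL4 l` are definitionally the cases `(l, 2, l)` and `(l, 2, 4)`. -/
def triangleRels (p q r : ℕ) : Set (FreeGroup (Fin 3)) :=
  {g0 ^ 2, g1 ^ 2, g2 ^ 2, (g0 * g1) ^ p, (g0 * g2) ^ q, (g1 * g2) ^ r}

/-- The reflection group presented by `triangleRels p q r`, that is, the Coxeter group of rank
three with exponents `p`, `q`, `r`. -/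
abbrev TriangleGroup (p q r : ℕ) : Type :=
  PresentedGroup (triangleRels p q r)

namespace TriangleGroup

open PresentedGroup (of)

variable (p q r : ℕ)

theorem triangleRelations_of :
    TriangleRelations p q r (of 0 : TriangleGroup p q r) (of 1) (of 2) := by
  have relator_eq_one : ∀ w ∈ triangleRels p q r, PresentedGroup.mk (triangleRels p q r) w = 1 :=
    fun _ => PresentedGroup.one_of_mem
  simp only [triangleRels, Set.mem_insert_iff, Set.mem_singleton_iff, forall_eq_or_imp,
    forall_eq] at relator_eq_one
  obtain ⟨ha, hb, hc, hab, hac, hbc⟩ := relator_eq_one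
  exact ⟨ha, hb, hc, hab, hac, hbc⟩

variable {p q r} {G : Type*} [Group G] {a b c : G}

/-- The universal property of `TriangleGroup p q r`: the homomorphism sending its generators to
a triple of elements that satisfies the relations. -/
def lift (h : TriangleRelations p q r a b c) : TriangleGroup p q r →* G :=
  PresentedGroup.toGroup (f := ![a, b, c]) <| by
    obtain ⟨ha, hb, hc, hab, hac, hbc⟩ := h
    simp [triangleRels, g0, g1, g2, ha, hb, hc, hab, hac, hbc]

@[simp]
theorem lift_of_zero (h : TriangleRelations p q r a b c) : lift h (of 0) = a :=
  PresentedGroup.toGroup.of _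

@[simp]
theorem lift_of_one (h : TriangleRelations p q r a b c) : lift h (of 1) = b :=
  PresentedGroup.toGroup.of _

@[simp]
theorem lift_of_two (h : TriangleRelations p q r a b c) : lift h (of 2) = c :=
  PresentedGroup.toGroup.of _

theorem hom_ext {φ ψ : TriangleGroup p q r →* G} (h0 : φ (of 0) = ψ (of 0))
    (h1 : φ (of 1) = ψ (of 1)) (h2 : φ (of 2) = ψ (of 2)) : φ = ψ :=
  PresentedGroup.ext fun i => by fin_cases i <;> assumption

variable (p q r)

/-- The homomorphism listing the generators in the opposite order, which exchanges the exponents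
`p` and `r`. -/
def reverseHom : TriangleGroup p q r →* TriangleGroup r q p :=
  lift (triangleRelations_of r q p).reverse

theorem reverseHom_comp_reverseHom :
    (reverseHom r q p).comp (reverseHom p q r) = MonoidHom.id _ := by
  apply hom_ext <;> simp [reverseHom]

/-- The symmetry of `TriangleGroup p q p` that exchanges the two outer generators and fixes the
middle one. -/
def reflection : MulAut (TriangleGroup p q p) :=
  MonoidHom.toMulEquiv (reverseHom p q p) (reverseHom p q p)
    (reverseHom_comp_reverseHom p q p) (reverseHom_comp_reverseHom p q p)

theorem reflection_sq : reflection p q ^ 2 = 1 :=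
  MulEquiv.ext fun x => DFunLike.congr_fun (reverseHom_comp_reverseHom p q p) x

theorem reflection_of_zero : reflection p q (of 0) = of 2 :=
  lift_of_zero (triangleRelations_of p q p).reverse

theorem reflection_of_one : reflection p q (of 1) = of 1 :=
  lift_of_one (triangleRelations_of p q p).reverse

variable (l m : ℕ)

/-- The homomorphism `a ↦ e`, `b ↦ d`, `c ↦ fef`, where `a`, `b`, `c` and `d`, `e`, `f` are the
generators of the source and the target. -/
def conjHom : TriangleGroup l m l →* TriangleGroup l 2 (2 * m) :=
  lift (triangleRelations_of l 2 (2 * m)).snd_fst_conj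

/-- The homomorphism `d ↦ b`, `e ↦ a`, `f ↦ reflection l m` into the holomorph of
`TriangleGroup l m l`, which inverts `conjHom l m` on its range. -/
def toHolomorph : TriangleGroup l 2 (2 * m) →*
    TriangleGroup l m l ⋊[MonoidHom.id _] MulAut (TriangleGroup l m l) :=
  lift ((triangleRelations_of l m l).semidirectProduct (reflection_sq l m)
    (reflection_of_zero l m) (reflection_of_one l m))

theorem toHolomorph_comp_conjHom :
    (toHolomorph l m).comp (conjHom l m) = SemidirectProduct.inl := by
  apply hom_ext <;>
    simp [toHolomorph, conjHom, inr_mul_inl_mul_inr (reflection_sq l m), reflection_of_zero]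

theorem conjHom_injective : Function.Injective (conjHom l m) := by
  have comp_injective : Function.Injective ((toHolomorph l m).comp (conjHom l m)) := by
    rw [toHolomorph_comp_conjHom]
    exact SemidirectProduct.inl_injective
  exact Function.Injective.of_comp comp_injective

end TriangleGroup

theorem exists_injective_hom_Rll_to_Rl4_general (l m : ℕ) :
    ∃ ψ : TriangleGroup l m l →* TriangleGroup l 2 (2 * m),
      Function.Injective ψ ∧
      ψ (PresentedGroup.of 0) = PresentedGroup.of 1 ∧
      ψ (PresentedGroup.of 1) = PresentedGroup.of 0 ∧
      ψ (PresentedGroup.of 2) =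
        PresentedGroup.of 2 * PresentedGroup.of 1 * PresentedGroup.of 2 :=
  ⟨TriangleGroup.conjHom l m, TriangleGroup.conjHom_injective l m, TriangleGroup.lift_of_zero _,
    TriangleGroup.lift_of_one _, TriangleGroup.lift_of_two _⟩

/-- For every `l ≥ 3` there is an injective group homomorphism
`R_{l,l} → R_{l,4}` sending `a ↦ e`, `b ↦ d`, `c ↦ f·e·f`. -/
theorem exists_injective_hom_Rll_to_Rl4 (l : ℕ) (hl : 3 ≤ l) :
    ∃ ψ : PresentedGroup (relsLL l) →* PresentedGroup (relsL4 l),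
      Function.Injective ψ ∧
      ψ (PresentedGroup.of 0) = PresentedGroup.of 1 ∧
      ψ (PresentedGroup.of 1) = PresentedGroup.of 0 ∧
      ψ (PresentedGroup.of 2) =
        PresentedGroup.of 2 * PresentedGroup.of 1 * PresentedGroup.of 2 :=
  exists_injective_hom_Rll_to_Rl4_general l 2

end Stmt6
end

section
/- Let (H_X, H_Z) be a CSS code with parameters (n, r_X, r_Z) and let (τ_n, τ_X, τ_Z) be a ZX-duality of it. Then conjugation by the Hadamard-type operator H_{τ_n} maps the stabilizer group of the code onto itself: the map M ↦ H_{τ_n} * M * H_{τ_n}⁻¹ restricts to a bijection of the stabilizer group. In particular H_{τ_n} is an encoded logical gate for the code. -/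
namespace Stmt8

variable {m : Type*} [Fintype m] [DecidableEq m]

/-- The Pauli operator `X^s`: entry 1 at `(u, v)` iff `u = v + s`. -/
noncomputable def PX (s : m → ZMod 2) : Matrix (m → ZMod 2) (m → ZMod 2) ℂ :=
  fun u v => if u = v + s then 1 else 0

/-- The Pauli operator `Z^s`: diagonal with entry `∏_j (-1)^{s_j v_j}` at `v`. -/
noncomputable def PZ (s : m → ZMod 2) : Matrix (m → ZMod 2) (m → ZMod 2) ℂ :=
  Matrix.diagonal fun v => ∏ j, (-1 : ℂ) ^ ((s j).val * (v j).val)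

/-- The `n`-qubit Hadamard transform, `W_{u,v} = (∏_j (-1)^{u_j v_j}) / 2^{n/2}`. -/
noncomputable def W : Matrix (m → ZMod 2) (m → ZMod 2) ℂ :=
  fun u v => (∏ j, (-1 : ℂ) ^ ((u j).val * (v j).val)) / (Real.sqrt 2 : ℂ) ^ (Fintype.card m)

/-- The permutation matrix `P_τ`: entry 1 at `(u, v)` iff `u = v ∘ τ⁻¹`. -/
noncomputable def Pperm (τ : Equiv.Perm m) : Matrix (m → ZMod 2) (m → ZMod 2) ℂ :=
  fun u v => if u = v ∘ ⇑τ.symm then 1 else 0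

/-- The Hadamard-type operator `H_τ = P_τ * W`. -/
noncomputable def Hop (τ : Equiv.Perm m) : Matrix (m → ZMod 2) (m → ZMod 2) ℂ :=
  Pperm τ * W

/-- A ZX-duality of a CSS code `(H_X, H_Z)`. -/
def IsZXDuality {q rX rZ : Type*} (HX : Matrix rX q (ZMod 2)) (HZ : Matrix rZ q (ZMod 2))
    (τn : q ≃ q) (τX : rX ≃ rZ) (τZ : rZ ≃ rX) : Prop :=
  (∀ i j, HZ (τX i) (τn j) = HX i j) ∧ (∀ i j, HX (τZ i) (τn j) = HZ i j)

/-- The stabilizer group of the CSS code `(H_X, H_Z)`: the subgroup of the group of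
invertible `2^n × 2^n` matrices generated by the `X^s` for `s` a row of `H_X` together
with the `Z^t` for `t` a row of `H_Z`. -/
noncomputable def stabilizer {rX rZ : Type*} (HX : Matrix rX m (ZMod 2))
    (HZ : Matrix rZ m (ZMod 2)) :
    Subgroup (Matrix (m → ZMod 2) (m → ZMod 2) ℂ)ˣ :=
  Subgroup.closure
    {U | (∃ i, (U : Matrix (m → ZMod 2) (m → ZMod 2) ℂ) = PX (HX i)) ∨
         (∃ i, (U : Matrix (m → ZMod 2) (m → ZMod 2) ℂ) = PZ (HZ i))}

/-!
Row `s` of the Hadamard transform is, up to scale, the character `χ_s` of `𝔽₂^n`, and `Z^s` is the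
diagonal matrix of `χ_s`. Multiplicativity of characters therefore gives `W X^s = Z^s W`, their
orthogonality gives `W² = 1`, and together these give `W Z^s = X^s W`. As `P_τ` permutes the
coordinates of `s`, conjugation by `H_τ` sends `X^s` to `Z^(s ∘ τ⁻¹)` and `Z^s` to `X^(s ∘ τ⁻¹)`.
A ZX-duality says exactly that this exchanges the two families of generators of the stabilizer
group.
-/

theorem neg_one_pow_val_add {R : Type*} [Ring R] (a b : ZMod 2) :
    (-1 : R) ^ (a + b).val = (-1) ^ a.val * (-1) ^ b.val := by
  rw [ZMod.val_add, ← neg_one_pow_eq_pow_mod_two, pow_add]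

section SignChar

variable {ι : Type*} [Fintype ι]

/-- The sign character `v ↦ ∏_j (-1)^{s_j v_j}` of `𝔽₂^ι` attached to `s`. Its values are the
diagonal entries of `Z^s` and, up to normalization, the entries of row `s` of the Hadamard
transform; bundling it as an `AddChar` gives access to orthogonality of characters. -/
noncomputable def signChar (s : ι → ZMod 2) : AddChar (ι → ZMod 2) ℂ where
  toFun v := ∏ j, (-1 : ℂ) ^ ((s j).val * (v j).val)
  map_zero_eq_one' := by simp
  map_add_eq_mul' v w := by
    simp only [← Finset.prod_mul_distrib, Pi.add_apply, pow_mul', neg_one_pow_val_add, mul_pow]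

theorem signChar_apply (s v : ι → ZMod 2) :
    signChar s v = ∏ j, (-1 : ℂ) ^ ((s j).val * (v j).val) :=
  rfl

theorem signChar_comm (s v : ι → ZMod 2) : signChar s v = signChar v s := by
  simp only [signChar_apply, mul_comm]

theorem signChar_add (s t : ι → ZMod 2) : signChar (s + t) = signChar s * signChar t := by
  ext v
  rw [AddChar.mul_apply, signChar_comm, AddChar.map_add_eq_mul, signChar_comm v s,
    signChar_comm v t]

theorem signChar_comp_symm {κ : Type*} [Fintype κ] (e : ι ≃ κ) (s : ι → ZMod 2)
    (v : κ → ZMod 2) : signChar (s ∘ e.symm) v = signChar s (v ∘ e) := by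
  rw [signChar_apply, ← e.prod_comp]
  simp [signChar_apply]

theorem signChar_single [DecidableEq ι] (s : ι → ZMod 2) (j : ι) :
    signChar s (Pi.single j 1) = (-1) ^ (s j).val := by
  rw [signChar_apply, Finset.prod_eq_single j] <;> simp +contextual [ZMod.val_one]

theorem signChar_eq_zero_iff (s : ι → ZMod 2) : signChar s = 0 ↔ s = 0 := by
  classical
  refine ⟨fun h => funext fun j => ?_, ?_⟩
  · have hsign : (-1 : ℂ) ^ (s j).val = 1 := by
      rw [← signChar_single, h, AddChar.zero_apply]
    rwa [neg_one_pow_eq_one_iff_even (by norm_num), ← ZMod.natCast_eq_zero_iff_even,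
      ZMod.natCast_zmod_val] at hsign
  · rintro rfl
    ext v
    simp [signChar_apply]

theorem sum_signChar [DecidableEq ι] (s : ι → ZMod 2) :
    ∑ v, signChar s v = if s = 0 then (2 : ℂ) ^ Fintype.card ι else 0 := by
  classical
  simp [AddChar.sum_eq_ite, signChar_eq_zero_iff]

end SignChar

section Entries

variable {ι : Type*} [Fintype ι]

theorem PZ_eq_diagonal (s : ι → ZMod 2) : PZ s = Matrix.diagonal (signChar s) :=
  rfl

theorem W_apply (u v : ι → ZMod 2) :
    W u v = signChar u v / (Real.sqrt 2 : ℂ) ^ Fintype.card ι :=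
  rfl

theorem PX_eq_permMatrix (s : ι → ZMod 2) : PX s = Equiv.Perm.permMatrix ℂ (Equiv.subRight s) := by
  ext u v
  simp [PX, PEquiv.toMatrix_apply, sub_eq_iff_eq_add]

theorem Pperm_eq_permMatrix (τ : Equiv.Perm ι) :
    Pperm τ = Equiv.Perm.permMatrix ℂ (τ.symm.arrowCongr (Equiv.refl (ZMod 2))) := by
  ext u v
  simp [Pperm, PEquiv.toMatrix_apply, Equiv.arrowCongr, Equiv.eq_comp_symm]

end Entries

theorem W_mul_W : (W : Matrix (m → ZMod 2) (m → ZMod 2) ℂ) * W = 1 := by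
  ext u v
  have sqrt_two_sq : (Real.sqrt 2 : ℂ) * Real.sqrt 2 = 2 := by
    rw [← Complex.ofReal_mul, Real.mul_self_sqrt zero_le_two, Complex.ofReal_ofNat]
  have add_eq_zero_iff : u + v = 0 ↔ u = v := by
    simp only [funext_iff, Pi.add_apply, Pi.zero_apply, CharTwo.add_eq_zero]
  calc (W * W : Matrix (m → ZMod 2) (m → ZMod 2) ℂ) u v
      = (∑ w, signChar (u + v) w) / 2 ^ Fintype.card m := by
        simp only [Matrix.mul_apply, W_apply, div_mul_div_comm, ← mul_pow, sqrt_two_sq,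
          signChar_comm _ v, signChar_add, AddChar.mul_apply, Finset.sum_div]
    _ = (1 : Matrix (m → ZMod 2) (m → ZMod 2) ℂ) u v := by
        simp [sum_signChar, add_eq_zero_iff, Matrix.one_apply, ite_div]

theorem semiconjBy_W_PX_PZ (s : m → ZMod 2) : SemiconjBy W (PX s) (PZ s) := by
  ext u v
  rw [PX_eq_permMatrix, PEquiv.mul_toMatrix_toPEquiv, PZ_eq_diagonal, Matrix.diagonal_mul]
  simp only [Matrix.submatrix_apply, id, Equiv.subRight_symm_apply, W_apply,
    AddChar.map_add_eq_mul, signChar_comm s u]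
  ring

theorem semiconjBy_W_PZ_PX (s : m → ZMod 2) : SemiconjBy W (PZ s) (PX s) :=
  calc W * PZ s = W * (PZ s * W) * W := by rw [mul_assoc, mul_assoc, W_mul_W, mul_one]
    _ = W * (W * PX s) * W := by rw [(semiconjBy_W_PX_PZ s).eq]
    _ = PX s * W := by rw [← mul_assoc W, W_mul_W, one_mul]

theorem semiconjBy_Pperm_PX (τ : Equiv.Perm m) (s : m → ZMod 2) :
    SemiconjBy (Pperm τ) (PX s) (PX (s ∘ τ.symm)) := by
  simp only [SemiconjBy, Pperm_eq_permMatrix, PX_eq_permMatrix, ← Matrix.permMatrix_mul]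
  congr 1
  ext u j
  simp [Equiv.arrowCongr]

theorem semiconjBy_Pperm_PZ (τ : Equiv.Perm m) (s : m → ZMod 2) :
    SemiconjBy (Pperm τ) (PZ s) (PZ (s ∘ τ.symm)) := by
  ext u v
  rw [PZ_eq_diagonal, PZ_eq_diagonal, Matrix.mul_diagonal, Matrix.diagonal_mul,
    signChar_comp_symm, mul_comm]
  by_cases huv : u = v ∘ τ.symm
  · rw [← (τ.eq_comp_symm u v).mp huv]
  · simp [Pperm, huv]

theorem semiconjBy_Hop_PX_PZ (τ : Equiv.Perm m) (s : m → ZMod 2) :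
    SemiconjBy (Hop τ) (PX s) (PZ (s ∘ τ.symm)) :=
  (semiconjBy_Pperm_PZ τ s).mul_left (semiconjBy_W_PX_PZ s)

theorem semiconjBy_Hop_PZ_PX (τ : Equiv.Perm m) (s : m → ZMod 2) :
    SemiconjBy (Hop τ) (PZ s) (PX (s ∘ τ.symm)) :=
  (semiconjBy_Pperm_PX τ s).mul_left (semiconjBy_W_PZ_PX s)

theorem isUnit_Pperm (τ : Equiv.Perm m) : IsUnit (Pperm τ) := by
  rw [Pperm_eq_permMatrix, Matrix.isUnit_iff_isUnit_det, Matrix.det_permutation]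
  exact (Units.isUnit _).map (Int.castRingHom ℂ)

theorem isUnit_Hop (τ : Equiv.Perm m) : IsUnit (Hop τ) :=
  (isUnit_Pperm τ).mul (IsUnit.of_mul_eq_one W W_mul_W)

theorem coe_conj_eq_iff_of_semiconjBy {M : Type*} [Monoid M] {h u : Mˣ} {a b : M}
    (hab : SemiconjBy (h : M) a b) : (MulAut.conj h u : M) = b ↔ (u : M) = a := by
  rw [MulAut.conj_apply, Units.val_mul, Units.mul_inv_eq_iff_eq_mul, ← hab.eq, Units.val_mul,
    Units.mul_right_inj]

namespace IsZXDuality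

variable {q rX rZ : Type*} {HX : Matrix rX q (ZMod 2)} {HZ : Matrix rZ q (ZMod 2)}
  {τn : q ≃ q} {τX : rX ≃ rZ} {τZ : rZ ≃ rX}

theorem HX_comp_symm (hτ : IsZXDuality HX HZ τn τX τZ) (i : rX) :
    HX i ∘ τn.symm = HZ (τX i) :=
  (τn.comp_symm_eq _ _).mpr (funext fun j => (hτ.1 i j).symm)

theorem HZ_comp_symm (hτ : IsZXDuality HX HZ τn τX τZ) (i : rZ) :
    HZ i ∘ τn.symm = HX (τZ i) :=
  (τn.comp_symm_eq _ _).mpr (funext fun j => (hτ.2 i j).symm)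

end IsZXDuality

theorem hadamardType_logical_gate_general {rX rZ : Type*}
    (HX : Matrix rX m (ZMod 2)) (HZ : Matrix rZ m (ZMod 2))
    (τn : Equiv.Perm m) (τX : rX ≃ rZ) (τZ : rZ ≃ rX) (hτ : IsZXDuality HX HZ τn τX τZ) :
    ∃ Hu : (Matrix (m → ZMod 2) (m → ZMod 2) ℂ)ˣ,
      (Hu : Matrix (m → ZMod 2) (m → ZMod 2) ℂ) = Hop τn ∧
      Subgroup.map (MulAut.conj Hu).toMonoidHom (stabilizer HX HZ) = stabilizer HX HZ := by
  obtain ⟨Hu, hHu⟩ := isUnit_Hop τn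
  refine ⟨Hu, hHu, ?_⟩
  have conj_eq_PX_iff (U) (i : rZ) :
      (MulAut.conj Hu U : Matrix _ _ ℂ) = PX (HX (τZ i)) ↔ (U : Matrix _ _ ℂ) = PZ (HZ i) :=
    coe_conj_eq_iff_of_semiconjBy <| by
      simpa only [hHu, hτ.HZ_comp_symm] using semiconjBy_Hop_PZ_PX τn (HZ i)
  have conj_eq_PZ_iff (U) (i : rX) :
      (MulAut.conj Hu U : Matrix _ _ ℂ) = PZ (HZ (τX i)) ↔ (U : Matrix _ _ ℂ) = PX (HX i) :=
    coe_conj_eq_iff_of_semiconjBy <| by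
      simpa only [hHu, hτ.HX_comp_symm] using semiconjBy_Hop_PX_PZ τn (HX i)
  rw [stabilizer, MonoidHom.map_closure]
  congr 1
  refine ((MulAut.conj Hu).toEquiv.eq_preimage_iff_image_eq _ _).mp (Set.ext fun U => ?_)
  rw [Set.mem_preimage, Set.mem_ofPred_eq, Set.mem_ofPred_eq, or_comm]
  exact or_congr (τZ.exists_congr fun i => (conj_eq_PX_iff U i).symm)
    (τX.exists_congr fun i => (conj_eq_PZ_iff U i).symm)

/-- If `(τ_n, τ_X, τ_Z)` is a ZX-duality of the CSS code `(H_X, H_Z)`, then conjugation by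
the Hadamard-type operator `H_{τ_n}` maps the stabilizer group onto itself; in particular
`H_{τ_n}` is an encoded logical gate. -/
theorem hadamardType_logical_gate {n rX rZ : ℕ}
    (HX : Matrix (Fin rX) (Fin n) (ZMod 2)) (HZ : Matrix (Fin rZ) (Fin n) (ZMod 2))
    (hCSS : HX * HZ.transpose = 0)
    (τn : Equiv.Perm (Fin n)) (τX : Fin rX ≃ Fin rZ) (τZ : Fin rZ ≃ Fin rX)
    (hτ : IsZXDuality HX HZ τn τX τZ) :
    ∃ Hu : (Matrix (Fin n → ZMod 2) (Fin n → ZMod 2) ℂ)ˣ,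
      (Hu : Matrix (Fin n → ZMod 2) (Fin n → ZMod 2) ℂ) = Hop τn ∧
      Subgroup.map (MulAut.conj Hu).toMonoidHom (stabilizer HX HZ) = stabilizer HX HZ := by
  exact hadamardType_logical_gate_general HX HZ τn τX τZ hτ

end Stmt8
end

section
/- Let n be a natural number and τ : Fin n ≃ Fin n a permutation with τ² = id. Then the Hadamard-type operator H_τ squares to the identity matrix: H_τ * H_τ = 1. -/
namespace Stmt9

variable {m : Type*} [Fintype m] [DecidableEq m]

/-- The `n`-qubit Hadamard transform, `W_{u,v} = (∏_j (-1)^{u_j v_j}) / 2^{n/2}`. -/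
noncomputable def W : Matrix (m → ZMod 2) (m → ZMod 2) ℂ :=
  fun u v => (∏ j, (-1 : ℂ) ^ ((u j).val * (v j).val)) / (Real.sqrt 2 : ℂ) ^ (Fintype.card m)

/-- The permutation matrix `P_τ`: entry 1 at `(u, v)` iff `u = v ∘ τ⁻¹`. -/
noncomputable def Pperm (τ : Equiv.Perm m) : Matrix (m → ZMod 2) (m → ZMod 2) ℂ :=
  fun u v => if u = v ∘ ⇑τ.symm then 1 else 0

/-- The Hadamard-type operator `H_τ = P_τ * W`. -/
noncomputable def Hop (τ : Equiv.Perm m) : Matrix (m → ZMod 2) (m → ZMod 2) ℂ :=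
  Pperm τ * W

section PermutationMatrix

omit [DecidableEq m] in
theorem Pperm_eq_toMatrix (τ : Equiv.Perm m) :
    Pperm τ = (τ.symm.arrowCongr (Equiv.refl (ZMod 2))).toPEquiv.toMatrix := by
  ext u v
  have comp_eq_iff : u = v ∘ τ.symm ↔ u ∘ τ = v := τ.eq_comp_symm u v
  simp only [Pperm, comp_eq_iff, PEquiv.toMatrix_apply, Equiv.toPEquiv_apply, Option.mem_some_iff]
  rfl

variable {k : Type*}

theorem Pperm_mul (τ : Equiv.Perm m) (A : Matrix (m → ZMod 2) k ℂ) :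
    Pperm τ * A = A.submatrix (· ∘ τ) id := by
  rw [Pperm_eq_toMatrix, PEquiv.toMatrix_toPEquiv_mul]
  rfl

theorem mul_Pperm (A : Matrix k (m → ZMod 2) ℂ) (τ : Equiv.Perm m) :
    A * Pperm τ = A.submatrix id (· ∘ τ.symm) := by
  rw [Pperm_eq_toMatrix, PEquiv.mul_toMatrix_toPEquiv]
  rfl

omit [DecidableEq m] in
theorem Pperm_one : Pperm (1 : Equiv.Perm m) = 1 := by
  ext u v
  simp [Pperm, Matrix.one_apply, Equiv.Perm.one_def]

theorem Pperm_mul_Pperm (σ τ : Equiv.Perm m) : Pperm σ * Pperm τ = Pperm (σ * τ) := by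
  ext u v
  have comp_eq_iff : u ∘ σ = v ∘ τ.symm ↔ u = v ∘ (σ * τ).symm :=
    (σ.eq_comp_symm u (v ∘ τ.symm)).symm
  simp only [Pperm_mul, Matrix.submatrix_apply, id_eq, Pperm, comp_eq_iff]

end PermutationMatrix

section HadamardTransform

omit [DecidableEq m] in
theorem W_comp_comp (τ : Equiv.Perm m) (u v : m → ZMod 2) : W (u ∘ τ) (v ∘ τ) = W u v :=
  congrArg (· / _) (Equiv.prod_comp τ fun j => (-1 : ℂ) ^ ((u j).val * (v j).val))

theorem commute_Pperm_W (τ : Equiv.Perm m) : Commute (Pperm τ) W := by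
  rw [commute_iff_eq, Pperm_mul, mul_Pperm]
  ext u v
  have cancel : (v ∘ τ.symm) ∘ τ = v := (τ.eq_comp_symm _ v).mp rfl
  calc W (u ∘ τ) v = W (u ∘ τ) ((v ∘ τ.symm) ∘ τ) := by rw [cancel]
    _ = W u (v ∘ τ.symm) := W_comp_comp τ u (v ∘ τ.symm)

theorem sum_neg_one_pow_val_mul {R : Type*} [Ring R] (a b : ZMod 2) :
    ∑ x : ZMod 2, (-1 : R) ^ (a.val * x.val) * (-1) ^ (x.val * b.val) =
      if a = b then 2 else 0 := by
  have sum_eq : ∀ f : ZMod 2 → R, ∑ x, f x = f 0 + f 1 := Fin.sum_univ_two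
  have eq_zero_or_eq_one : ∀ c : ZMod 2, c = 0 ∨ c = 1 := by decide
  rw [sum_eq]
  rcases eq_zero_or_eq_one a with rfl | rfl <;> rcases eq_zero_or_eq_one b with rfl | rfl <;>
    simp [ZMod.val_one, one_add_one_eq_two]

theorem sum_prod_neg_one_pow_val_mul {R : Type*} [CommRing R] (u w : m → ZMod 2) :
    ∑ v : m → ZMod 2, (∏ j, (-1 : R) ^ ((u j).val * (v j).val)) *
        ∏ j, (-1) ^ ((v j).val * (w j).val) =
      if u = w then 2 ^ Fintype.card m else 0 := by
  calc
    _ = ∏ j, ∑ x : ZMod 2, (-1 : R) ^ ((u j).val * x.val) * (-1) ^ (x.val * (w j).val) := by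
      simp only [← Finset.prod_mul_distrib, Fintype.prod_sum]
    _ = ∏ j, if u j = w j then 2 else 0 := by simp only [sum_neg_one_pow_val_mul]
    _ = if u = w then 2 ^ Fintype.card m else 0 := by
      simp [Finset.prod_ite_zero, funext_iff]

theorem W_mul_W : (W : Matrix (m → ZMod 2) (m → ZMod 2) ℂ) * W = 1 := by
  have sqrt_mul_sqrt : (√2 : ℂ) * √2 = 2 := by
    exact_mod_cast Real.mul_self_sqrt zero_le_two
  ext u w
  simp only [Matrix.mul_apply, W, div_mul_div_comm, ← Finset.sum_div,
    sum_prod_neg_one_pow_val_mul, ← mul_pow, sqrt_mul_sqrt, Matrix.one_apply]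
  split_ifs <;> simp

end HadamardTransform

theorem Hop_mul_Hop (σ τ : Equiv.Perm m) : Hop σ * Hop τ = Pperm (σ * τ) := by
  calc Pperm σ * W * (Pperm τ * W) = Pperm σ * Pperm τ * (W * W) :=
        (commute_Pperm_W τ).symm.mul_mul_mul_comm _ _
    _ = Pperm (σ * τ) := by rw [W_mul_W, mul_one, Pperm_mul_Pperm]

theorem hadamardType_sq_eq_one_general (τ : Equiv.Perm m) (hτ : τ * τ = 1) :
    Hop τ * Hop τ = 1 := by
  rw [Hop_mul_Hop, hτ, Pperm_one]

/-- If `τ² = id` then the Hadamard-type operator `H_τ` squares to the identity. -/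
theorem hadamardType_sq_eq_one {n : ℕ} (τ : Equiv.Perm (Fin n))
    (hτ : τ * τ = 1) :
    Hop τ * Hop τ = 1 :=
  hadamardType_sq_eq_one_general τ hτ

end Stmt9
end

section
/- Let n be a natural number, τ : Fin n ≃ Fin n an involutive permutation (τ² = id) with fixed-point set F, and let A, B be disjoint sets with A ∪ B = F. Let s : Fin n → ZMod 2 with support supp(s) = {j : s j = 1}. Assume (i) |supp(s) ∩ A| = |supp(s) ∩ B|, and (ii) the number of two-element orbits {j, τ j} of τ with both elements in supp(s) is even. Then conjugation of the Pauli operator X^s by the phase-type operator S_τ (defined from τ, A, B) satisfies exactly S_τ * X^s * S_τ⁻¹ = X^s * Z^{s ∘ τ}, with no residual phase factor. -/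
namespace Stmt10

variable {q : Type*} [Fintype q] [DecidableEq q]

/-- The Pauli operator `X^s`: entry 1 at `(u, v)` iff `u = v + s`. -/
noncomputable def PX (s : q → ZMod 2) : Matrix (q → ZMod 2) (q → ZMod 2) ℂ :=
  fun u v => if u = v + s then 1 else 0

/-- The Pauli operator `Z^s`: diagonal with entry `∏_j (-1)^{s_j v_j}` at `v`. -/
noncomputable def PZ (s : q → ZMod 2) : Matrix (q → ZMod 2) (q → ZMod 2) ℂ :=
  Matrix.diagonal fun v => ∏ j, (-1 : ℂ) ^ ((s j).val * (v j).val)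

/-- The number of two-element orbits `{j, τ j}` of `τ` (with `j ≠ τ j`) on which
`v` takes the value `1` on both elements.  (Each such orbit contributes two elements
to the filtered set, whence the division by 2.) -/
def orbitCount (τ : Equiv.Perm q) (v : q → ZMod 2) : ℕ :=
  (Finset.univ.filter fun j => τ j ≠ j ∧ v j = 1 ∧ v (τ j) = 1).card / 2

/-- The phase-type operator `S_τ` associated to an involutive permutation `τ` and a
partition `A ⊔ B` of its fixed-point set: the diagonal matrix with entry
`i^{|{j ∈ A : v j = 1}|} · (-i)^{|{j ∈ B : v j = 1}|} · (-1)^{m(v)}` at `v`. -/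
noncomputable def Sop (τ : Equiv.Perm q) (A B : Finset q) :
    Matrix (q → ZMod 2) (q → ZMod 2) ℂ :=
  Matrix.diagonal fun v =>
    Complex.I ^ (A.filter fun j => v j = 1).card *
    (-Complex.I) ^ (B.filter fun j => v j = 1).card *
    (-1 : ℂ) ^ orbitCount τ v

/-! The diagonal entry of `S_τ` at `v` is `∏ j, c j ^ (v j * v (τ j))` for weights `c j = ± i`: at a
fixed point the exponent is `v j`, and a two-element orbit contributes `i ^ 2 = -1` exactly when `v`
is `1` on both of its elements. Modulo 4, the quadratic form `∑ j, v j * v (τ j)` polarizes to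
`2 * ∑ j, v j * s (τ j)`, because `τ` pairs up the cross terms and the carries of the addition
`v + s`. Hence translating `v` by `s` multiplies the entry by its value at `s` and by the diagonal
entry of `Z^{s ∘ τ}` at `v`. -/

section QuadraticPhase

variable {ι : Type*}

lemma zmod_two_val_mul (a b : ZMod 2) : (a * b).val = a.val * b.val := by
  revert a b
  decide

lemma zmod_two_mul_eq_one {a b : ZMod 2} : a * b = 1 ↔ a = 1 ∧ b = 1 := by
  revert a b
  decide

lemma pow_val_eq_ite {M : Type*} [Monoid M] (c : M) (a : ZMod 2) :
    c ^ a.val = if a = 1 then c else 1 := by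
  obtain rfl | rfl : a = 0 ∨ a = 1 := by revert a; decide
  · simp
  · simp [ZMod.val_one]

lemma prod_pow_val_eq_pow_card {M : Type*} [CommMonoid M] (c : M) (t : Finset ι)
    (v : ι → ZMod 2) : ∏ j ∈ t, c ^ (v j).val = c ^ (t.filter fun j => v j = 1).card := by
  simp only [pow_val_eq_ite, ← Finset.prod_filter, Finset.prod_const]

lemma even_card_of_involutive {f : ι → ι} (hf : Function.Involutive f) {t : Finset ι}
    (ht : ∀ j ∈ t, f j ∈ t) (hne : ∀ j ∈ t, f j ≠ j) : Even t.card := by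
  have hprod : ∏ _j ∈ t, (-1 : ℤ) = 1 :=
    Finset.prod_involution (fun j _ => f j) (fun _ _ => by norm_num) (fun j hj _ => hne j hj)
      ht (fun j _ => hf j)
  rwa [Finset.prod_const, neg_one_pow_eq_one_iff_even (by norm_num)] at hprod

lemma prod_mul_comp_perm [Fintype ι] {M : Type*} [CommMonoid M] (τ : Equiv.Perm ι) (f : ι → M) :
    ∏ j, f j * f (τ j) = ∏ j, f j ^ 2 := by
  rw [Finset.prod_mul_distrib, Equiv.prod_comp τ f, ← Finset.prod_mul_distrib]
  simp only [sq]

-- The last two factors account for the carries that the two sums lose in `ZMod 2`.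
lemma pow_val_add_mul_add {R : Type*} [Ring R] {c : R} (hc : c ^ 2 = -1) (a b a' b' : ZMod 2) :
    c ^ ((a + b) * (a' + b')).val =
      c ^ (a * a').val * c ^ (b * b').val * (c ^ (a * b').val * c ^ (a' * b).val) *
        ((-1) ^ (a * b * (a' + b')).val * (-1) ^ (a' * b' * (a + b)).val) := by
  have hc4 : c ^ 4 = 1 := by rw [pow_mul c 2 2, hc, neg_one_sq]
  have hmod : ((a + b) * (a' + b')).val ≡
      (a * a').val + (b * b').val + ((a * b').val + (a' * b).val) +
        (2 * (a * b * (a' + b')).val + 2 * (a' * b' * (a + b)).val) [MOD 4] := by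
    revert a b a' b'
    decide
  rw [pow_eq_pow_of_modEq hmod hc4]
  simp only [pow_add, pow_mul, hc]

/-- The exponential `∏ j, c j ^ (v j * v (τ j))` of the quadratic form `∑ j, v j * v (τ j)` with
weights `c`. Exponents in `ZMod 2` are read as the natural numbers `0` and `1`. -/
def quadPhase [Fintype ι] {M : Type*} [CommMonoid M] (τ : Equiv.Perm ι) (c : ι → M)
    (v : ι → ZMod 2) : M :=
  ∏ j, c j ^ (v j * v (τ j)).val

theorem quadPhase_add [Fintype ι] {R : Type*} [CommRing R] {τ : Equiv.Perm ι}
    (hτ : Function.Involutive τ) {c : ι → R} (hc : ∀ j, c j ^ 2 = -1) (hcτ : ∀ j, c (τ j) = c j)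
    (v s : ι → ZMod 2) :
    quadPhase τ c (v + s) =
      quadPhase τ c v * quadPhase τ c s * ∏ j, (-1) ^ (v j * s (τ j)).val := by
  have cross : ∏ j, c j ^ (v j * s (τ j)).val * c j ^ (v (τ j) * s j).val =
      ∏ j, (-1) ^ (v j * s (τ j)).val := by
    have hpair := prod_mul_comp_perm τ fun j => c j ^ (v j * s (τ j)).val
    simpa only [hτ _, hcτ, pow_right_comm _ _ 2, hc] using hpair
  have carries : ∏ j, (-1 : R) ^ (v j * s j * (v (τ j) + s (τ j))).val *
      (-1) ^ (v (τ j) * s (τ j) * (v j + s j)).val = 1 := by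
    have hpair := prod_mul_comp_perm τ fun j => (-1 : R) ^ (v j * s j * (v (τ j) + s (τ j))).val
    simpa only [hτ _, pow_right_comm _ _ 2, neg_one_sq, one_pow, Finset.prod_const_one] using hpair
  simp only [quadPhase, Pi.add_apply, pow_val_add_mul_add (hc _)]
  rw [Finset.prod_mul_distrib, carries, mul_one, Finset.prod_mul_distrib, cross,
    Finset.prod_mul_distrib]

/-- The weights `± i` for which `quadPhase` gives the entries of `S_τ`: `-i` on `B` and `i`
elsewhere. -/
noncomputable def phaseWeight [DecidableEq ι] (B : Finset ι) (j : ι) : ℂ :=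
  if j ∈ B then -Complex.I else Complex.I

lemma phaseWeight_sq [DecidableEq ι] (B : Finset ι) (j : ι) : phaseWeight B j ^ 2 = -1 := by
  unfold phaseWeight
  split_ifs <;> simp

lemma phaseWeight_apply_perm [DecidableEq ι] {τ : Equiv.Perm ι} {B : Finset ι}
    (hB : ∀ j ∈ B, τ j = j) (j : ι) :
    phaseWeight B (τ j) = phaseWeight B j := by
  by_cases hfix : τ j = j
  · rw [hfix]
  · have hj : j ∉ B := fun hj => hfix (hB j hj)
    have hτj : τ j ∉ B := fun hτj => hfix (τ.injective (hB _ hτj))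
    simp only [phaseWeight, hj, hτj, if_false]

end QuadraticPhase

lemma diagonal_mul_PX_mul_inv {d : (q → ZMod 2) → ℂ} (hd : ∀ v, d v ≠ 0) (s : q → ZMod 2) :
    Matrix.diagonal d * PX s * (Matrix.diagonal d)⁻¹ =
      PX s * Matrix.diagonal fun v => d (v + s) / d v := by
  have hinv : (Matrix.diagonal d)⁻¹ = Matrix.diagonal fun v => (d v)⁻¹ :=
    Matrix.inv_eq_right_inv <| by simp [Matrix.diagonal_mul_diagonal, hd]
  ext u v
  rw [hinv, Matrix.mul_diagonal, Matrix.diagonal_mul, Matrix.mul_diagonal, PX]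
  split_ifs with huv
  · rw [huv]
    ring
  · simp

/-- The diagonal entry of `S_τ` at `v`. Its value at `s` is the residual phase of the conjugate of
`X^s` by `S_τ`. -/
noncomputable def phase (τ : Equiv.Perm q) (A B : Finset q) (v : q → ZMod 2) : ℂ :=
  Complex.I ^ (A.filter fun j => v j = 1).card *
    (-Complex.I) ^ (B.filter fun j => v j = 1).card *
    (-1 : ℂ) ^ orbitCount τ v

lemma Sop_eq_diagonal_phase (τ : Equiv.Perm q) (A B : Finset q) :
    Sop τ A B = Matrix.diagonal (phase τ A B) :=
  rfl

lemma phase_ne_zero (τ : Equiv.Perm q) (A B : Finset q) (v : q → ZMod 2) :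
    phase τ A B v ≠ 0 := by
  simp [phase]

lemma phase_eq_one {τ : Equiv.Perm q} {A B : Finset q} {s : q → ZMod 2}
    (hcard : ((Finset.univ.filter fun j => s j = 1) ∩ A).card
      = ((Finset.univ.filter fun j => s j = 1) ∩ B).card)
    (heven : Even (orbitCount τ s)) : phase τ A B s = 1 := by
  simp only [Finset.filter_inter, Finset.univ_inter] at hcard
  rw [phase, hcard, heven.neg_one_pow, ← mul_pow]
  simp

lemma I_pow_card_eq_neg_one_pow_orbitCount {τ : Equiv.Perm q} (hτ : Function.Involutive τ)
    (v : q → ZMod 2) :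
    Complex.I ^ (Finset.univ.filter fun j => τ j ≠ j ∧ v j = 1 ∧ v (τ j) = 1).card =
      (-1) ^ orbitCount τ v := by
  have heven : Even (Finset.univ.filter fun j => τ j ≠ j ∧ v j = 1 ∧ v (τ j) = 1).card := by
    apply even_card_of_involutive hτ <;> simp +contextual [hτ _, eq_comm]
  rw [orbitCount, ← Complex.I_sq, ← pow_mul, Nat.two_mul_div_two_of_even heven]

theorem phase_eq_quadPhase {τ : Equiv.Perm q} (hτ : Function.Involutive τ) {A B : Finset q}
    (hAB : Disjoint A B) (hF : A ∪ B = Finset.univ.filter fun j => τ j = j) (v : q → ZMod 2) :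
    phase τ A B v = quadPhase τ (phaseWeight B) v := by
  have hfix : ∀ j ∈ A ∪ B, τ j = j := fun j hj => by simpa [hF] using hj
  have hexp : ∀ j ∈ A ∪ B, v j * v (τ j) = v j := fun j hj => by
    rw [hfix j hj, ← sq, ZMod.pow_card]
  have prod_A : ∏ j ∈ A, phaseWeight B j ^ (v j * v (τ j)).val =
      Complex.I ^ (A.filter fun j => v j = 1).card := by
    rw [← prod_pow_val_eq_pow_card]
    refine Finset.prod_congr rfl fun j hj => ?_
    rw [hexp j (Finset.mem_union_left B hj), phaseWeight, if_neg (Finset.disjoint_left.mp hAB hj)]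
  have prod_B : ∏ j ∈ B, phaseWeight B j ^ (v j * v (τ j)).val =
      (-Complex.I) ^ (B.filter fun j => v j = 1).card := by
    rw [← prod_pow_val_eq_pow_card]
    refine Finset.prod_congr rfl fun j hj => ?_
    rw [hexp j (Finset.mem_union_right A hj), phaseWeight, if_pos hj]
  have prod_moved : ∏ j with τ j ≠ j, phaseWeight B j ^ (v j * v (τ j)).val =
      (-1) ^ orbitCount τ v := by
    rw [← I_pow_card_eq_neg_one_pow_orbitCount hτ, ← Finset.filter_filter]
    simp only [← zmod_two_mul_eq_one]
    rw [← prod_pow_val_eq_pow_card]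
    refine Finset.prod_congr rfl fun j hj => ?_
    have hjB : j ∉ B := fun hjB =>
      (Finset.mem_filter.mp hj).2 (hfix j (Finset.mem_union_right A hjB))
    rw [phaseWeight, if_neg hjB]
  rw [phase, quadPhase, ← Finset.prod_filter_mul_prod_filter_not Finset.univ (fun j => τ j = j),
    ← hF, Finset.prod_union hAB, prod_A, prod_B, prod_moved]

theorem phase_add {τ : Equiv.Perm q} (hτ : Function.Involutive τ) {A B : Finset q}
    (hAB : Disjoint A B) (hF : A ∪ B = Finset.univ.filter fun j => τ j = j)
    (v s : q → ZMod 2) :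
    phase τ A B (v + s) =
      phase τ A B v * phase τ A B s * ∏ j, (-1) ^ (v j * s (τ j)).val := by
  have hB : ∀ j ∈ B, τ j = j := fun j hj => by
    simpa [hF] using Finset.mem_union_right A hj
  simp only [phase_eq_quadPhase hτ hAB hF]
  exact quadPhase_add hτ (phaseWeight_sq B) (phaseWeight_apply_perm hB) v s

theorem phaseType_conj_paulix_general {τ : Equiv.Perm q} (hτ : Function.Involutive τ)
    {A B : Finset q} (hAB : Disjoint A B) (hF : A ∪ B = Finset.univ.filter fun j => τ j = j)
    (s : q → ZMod 2) :
    Sop τ A B * PX s * (Sop τ A B)⁻¹ = phase τ A B s • (PX s * PZ (s ∘ ⇑τ)) := by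
  have hratio : ∀ v, phase τ A B (v + s) / phase τ A B v =
      phase τ A B s * ∏ j, (-1) ^ (((s ∘ τ) j).val * (v j).val) := fun v => by
    simp only [phase_add hτ hAB hF, mul_assoc, mul_div_cancel_left₀ _ (phase_ne_zero τ A B v),
      Function.comp_apply, ← zmod_two_val_mul, mul_comm (v _)]
  rw [Sop_eq_diagonal_phase, diagonal_mul_PX_mul_inv (phase_ne_zero τ A B), PZ,
    ← Matrix.mul_smul, ← Matrix.diagonal_smul]
  simp only [hratio, Pi.smul_def, smul_eq_mul]

/-- Conjugating `X^s` by the phase-type operator `S_τ` yields exactly `X^s Z^{s∘τ}`,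
with no residual phase, provided (i) `supp(s)` meets `A` and `B` in sets of equal size and
(ii) the number of two-element orbits of `τ` contained in `supp(s)` is even. -/
theorem phaseType_conj_paulix {n : ℕ} (τ : Equiv.Perm (Fin n))
    (hτ : τ * τ = 1) (A B : Finset (Fin n)) (hAB : Disjoint A B)
    (hF : A ∪ B = Finset.univ.filter fun j => τ j = j)
    (s : Fin n → ZMod 2)
    (h1 : ((Finset.univ.filter fun j => s j = 1) ∩ A).card
        = ((Finset.univ.filter fun j => s j = 1) ∩ B).card)
    (h2 : Even (orbitCount τ s)) :
    Sop τ A B * PX s * (Sop τ A B)⁻¹ = PX s * PZ (s ∘ ⇑τ) := by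
  rw [phaseType_conj_paulix_general (DFunLike.congr_fun hτ) hAB hF, phase_eq_one h1 h2, one_smul]

end Stmt10
end

section
/- Let (H_X, H_Z) be a CSS code with parameters (n, r_X, r_Z) admitting a ZX-duality (τ_n, τ_X, τ_Z) whose qubit permutation τ_n is an involution. Suppose the fixed-point set F of τ_n admits a partition F = A ⊔ B such that every row s of H_X satisfies |supp(s) ∩ A| = |supp(s) ∩ B| and contains an even number of two-element orbits {j, τ_n j} of τ_n. Then conjugation by the phase-type operator S_{τ_n} (defined from τ_n, A, B) maps the stabilizer group of the code onto itself; in particular S_{τ_n} is an encoded logical gate for the code. -/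
namespace Stmt11

variable {q : Type*} [Fintype q] [DecidableEq q]

/-- The Pauli operator `X^s`: entry 1 at `(u, v)` iff `u = v + s`. -/
noncomputable def PX (s : q → ZMod 2) : Matrix (q → ZMod 2) (q → ZMod 2) ℂ :=
  fun u v => if u = v + s then 1 else 0

/-- The Pauli operator `Z^s`: diagonal with entry `∏_j (-1)^{s_j v_j}` at `v`. -/
noncomputable def PZ (s : q → ZMod 2) : Matrix (q → ZMod 2) (q → ZMod 2) ℂ :=
  Matrix.diagonal fun v => ∏ j, (-1 : ℂ) ^ ((s j).val * (v j).val)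

/-- The number of two-element orbits `{j, τ j}` of `τ` (with `j ≠ τ j`) on which
`v` takes the value `1` on both elements. -/
def orbitCount (τ : Equiv.Perm q) (v : q → ZMod 2) : ℕ :=
  (Finset.univ.filter fun j => τ j ≠ j ∧ v j = 1 ∧ v (τ j) = 1).card / 2

/-- The phase-type operator `S_τ` associated to an involutive permutation `τ` and a
partition `A ⊔ B` of its fixed-point set. -/
noncomputable def Sop (τ : Equiv.Perm q) (A B : Finset q) :
    Matrix (q → ZMod 2) (q → ZMod 2) ℂ :=
  Matrix.diagonal fun v =>
    Complex.I ^ (A.filter fun j => v j = 1).card *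
    (-Complex.I) ^ (B.filter fun j => v j = 1).card *
    (-1 : ℂ) ^ orbitCount τ v

/-- A ZX-duality of a CSS code `(H_X, H_Z)`. -/
def IsZXDuality {q rX rZ : Type*} (HX : Matrix rX q (ZMod 2)) (HZ : Matrix rZ q (ZMod 2))
    (τn : q ≃ q) (τX : rX ≃ rZ) (τZ : rZ ≃ rX) : Prop :=
  (∀ i j, HZ (τX i) (τn j) = HX i j) ∧ (∀ i j, HX (τZ i) (τn j) = HZ i j)

/-- The stabilizer group of the CSS code `(H_X, H_Z)`. -/
noncomputable def stabilizer {rX rZ : Type*} (HX : Matrix rX q (ZMod 2))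
    (HZ : Matrix rZ q (ZMod 2)) :
    Subgroup (Matrix (q → ZMod 2) (q → ZMod 2) ℂ)ˣ :=
  Subgroup.closure
    {U | (∃ i, (U : Matrix (q → ZMod 2) (q → ZMod 2) ℂ) = PX (HX i)) ∨
         (∃ i, (U : Matrix (q → ZMod 2) (q → ZMod 2) ℂ) = PZ (HZ i))}

/-!
Each point `j` of a two-element orbit may be given the weight `i`, since `i * i = -1`. The diagonal
of `S_τ` then becomes a single product `φ v = ∏ j, ε j ^ (v j * v (τ j))` with `ε j = ± i`, and `φ`
is a quadratic refinement of the pairing twisted by `τ`: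
`φ (v + s) = φ v * φ s * (-1) ^ ∑ j, s (τ j) * v j`.
In operator form this says `S_τ X^s S_τ⁻¹ = φ s • X^s Z^(s ∘ τ)`. On a row `s` of `H_X` the balance
conditions give `φ s = 1`, and the duality makes `s ∘ τ` a row of `H_Z`; the `Z`-type generators
commute with the diagonal matrix `S_τ`.
-/

lemma map_closure_eq_closure_of_map_eq_mul {G : Type*} [Group G] (φ : G →* G) {S : Set G}
    (hφ : ∀ x ∈ S, ∃ w ∈ Subgroup.closure S, φ w = w ∧ φ x = x * w) :
    (Subgroup.closure S).map φ = Subgroup.closure S := by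
  apply le_antisymm
  · rw [Subgroup.map_le_iff_le_comap, Subgroup.closure_le]
    intro x hx
    obtain ⟨w, hw, -, hxw⟩ := hφ x hx
    simpa only [SetLike.mem_coe, Subgroup.mem_comap, hxw] using
      mul_mem (Subgroup.subset_closure hx) hw
  · rw [Subgroup.closure_le]
    intro x hx
    obtain ⟨w, hw, hφw, hxw⟩ := hφ x hx
    exact ⟨x * w⁻¹, mul_mem (Subgroup.subset_closure hx) (inv_mem hw), by
      rw [map_mul, map_inv, hφw, hxw, mul_inv_cancel_right]⟩

section Involution

variable {ι : Type*} {σ : ι → ι}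

lemma even_card_of_involutive {s : Finset ι} (hσ : Function.Involutive σ)
    (hmaps : ∀ j ∈ s, σ j ∈ s) (hfree : ∀ j ∈ s, σ j ≠ j) : Even s.card := by
  rw [← ZMod.natCast_eq_zero_iff_even, Finset.cast_card]
  exact Finset.sum_involution (fun j _ => σ j) (fun _ _ => CharTwo.add_self_eq_zero 1)
    (fun j hj _ => hfree j hj) hmaps (fun j _ => hσ j)

lemma prod_eq_prod_of_involutive [Fintype ι] {M : Type*} [CommGroupWithZero M] {f g : ι → M}
    (hσ : Function.Involutive σ) (hg : ∀ j, g j ≠ 0) (hfixed : ∀ j, σ j = j → f j = g j)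
    (hpair : ∀ j, f j * f (σ j) = g j * g (σ j)) : ∏ j, f j = ∏ j, g j := by
  have hratio : ∏ j, f j / g j = 1 := by
    refine Finset.prod_involution (fun j _ => σ j) (fun j _ => ?_) (fun j _ hne hj => hne ?_)
      (fun _ _ => Finset.mem_univ _) (fun j _ => hσ j)
    · rw [div_mul_div_comm, hpair, div_self (mul_ne_zero (hg _) (hg _))]
    · rw [hfixed j hj, div_self (hg j)]
  rw [Finset.prod_div_distrib] at hratio
  exact eq_of_div_eq_one hratio

end Involution

section BinaryExponents

lemma pow_zmod_two_val {M : Type*} [Monoid M] (c : M) (x : ZMod 2) :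
    c ^ x.val = if x = 1 then c else 1 := by
  fin_cases x
  · exact pow_zero c
  · exact pow_one c

lemma prod_pow_zmod_two_val {ι M : Type*} [CommMonoid M] (c : M) (s : Finset ι) (x : ι → ZMod 2) :
    ∏ j ∈ s, c ^ (x j).val = c ^ (s.filter fun j => x j = 1).card := by
  simp only [pow_zmod_two_val, ← Finset.prod_filter, Finset.prod_const]

lemma zmod_two_mul_eq_one_iff {x y : ZMod 2} : x * y = 1 ↔ x = 1 ∧ y = 1 := by
  revert x y
  decide

lemma zmod_two_mul_self (x : ZMod 2) : x * x = x := by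
  revert x
  decide

variable {R : Type*} [Ring R]

lemma pow_zmod_two_val_add {c : R} (hc : c ^ 2 = -1) (x y : ZMod 2) :
    c ^ (x + y).val = c ^ x.val * c ^ y.val * (-1) ^ (y.val * x.val) := by
  have hcarry : x.val + y.val = (x + y).val + 2 * (y.val * x.val) := by
    revert x y
    decide
  rw [← pow_add, hcarry, pow_add, pow_mul, hc, mul_assoc, ← pow_add,
    Even.neg_one_pow ⟨_, rfl⟩, mul_one]

lemma neg_one_pow_zmod_two_val_add (x y : ZMod 2) :
    (-1 : R) ^ (x + y).val = (-1) ^ x.val * (-1) ^ y.val := by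
  rw [ZMod.val_add, ← neg_one_pow_eq_pow_mod_two, pow_add]

lemma neg_one_pow_zmod_two_val_mul (x y : ZMod 2) :
    (-1 : R) ^ (x * y).val = (-1) ^ (x.val * y.val) := by
  rw [ZMod.val_mul, ← neg_one_pow_eq_pow_mod_two]

end BinaryExponents

section InvolutionPhase

variable {ι : Type*} [Fintype ι]

/-- The phase `∏ j, ε j ^ (v j * v (τ j))` attached to an involution `τ` and weights `ε`. The
product runs over points, so a two-element orbit contributes through both of its points and a fixed
point `j` contributes `ε j ^ v j`. -/
def involutionPhase {M : Type*} [CommMonoid M] (ε : ι → M) (τ : ι → ι) (v : ι → ZMod 2) : M :=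
  ∏ j, ε j ^ (v j * v (τ j)).val

theorem involutionPhase_add {K : Type*} [Field K] {ε : ι → K} {τ : ι → ι}
    (hτ : Function.Involutive τ) (hε : ∀ j, ε j ^ 2 = -1) (hετ : ∀ j, ε (τ j) = ε j)
    (v s : ι → ZMod 2) :
    involutionPhase ε τ (v + s) = involutionPhase ε τ v * involutionPhase ε τ s *
      ∏ j, (-1) ^ ((s (τ j)).val * (v j).val) := by
  have hε0 (j : ι) : ε j ≠ 0 := fun h => by simpa [h] using hε j
  simp only [involutionPhase, ← Finset.prod_mul_distrib]
  refine prod_eq_prod_of_involutive hτ (fun j => by simp [hε0]) (fun j hj => ?_) (fun j => ?_)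
  · simp only [hj, zmod_two_mul_self, Pi.add_apply]
    exact pow_zmod_two_val_add (hε j) _ _
  · have hsq (k : ℕ) : ε j ^ k * ε j ^ k = (-1) ^ k := by rw [← mul_pow, ← sq, hε]
    simp only [hτ j, hετ, Pi.add_apply, mul_comm (v (τ j)) (v j), mul_comm (s (τ j)) (s j),
      mul_comm (v (τ j) + s (τ j)) (v j + s j)]
    calc ε j ^ ((v j + s j) * (v (τ j) + s (τ j))).val
          * ε j ^ ((v j + s j) * (v (τ j) + s (τ j))).val
        = (-1) ^ (v j * v (τ j)).val * (-1) ^ (s j * s (τ j)).val *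
            ((-1) ^ (s (τ j) * v j).val * (-1) ^ (s j * v (τ j)).val) := by
          rw [hsq]
          simp only [← neg_one_pow_zmod_two_val_add]
          congr 2
          ring
      _ = _ := by
          rw [← hsq, ← hsq, neg_one_pow_zmod_two_val_mul, neg_one_pow_zmod_two_val_mul]
          ring

end InvolutionPhase

section QubitWeight

variable {ι : Type*} [DecidableEq ι]

/-- The weight of a qubit in `involutionPhase` that reproduces `Sop`: `-i` on `B`, and `i` both on
`A` and on the points of two-element orbits. -/
noncomputable def qubitWeight (B : Finset ι) (j : ι) : ℂ :=
  if j ∈ B then -Complex.I else Complex.I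

lemma qubitWeight_sq (B : Finset ι) (j : ι) : qubitWeight B j ^ 2 = -1 := by
  rw [qubitWeight]
  split_ifs <;> simp

lemma qubitWeight_perm_apply {B : Finset ι} {τ : Equiv.Perm ι} (hB : ∀ j ∈ B, τ j = j) (j : ι) :
    qubitWeight B (τ j) = qubitWeight B j := by
  have hmem : τ j ∈ B ↔ j ∈ B :=
    ⟨fun h => τ.injective (hB _ h) ▸ h, fun h => (hB j h).symm ▸ h⟩
  simp only [qubitWeight, hmem]

end QubitWeight

section PhaseTypeOperator

variable {τ : Equiv.Perm q} {A B : Finset q}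

lemma neg_one_pow_orbitCount (hτ : Function.Involutive τ) (v : q → ZMod 2) :
    (-1 : ℂ) ^ orbitCount τ v =
      ∏ j ∈ Finset.univ.filter (fun j => ¬ τ j = j), Complex.I ^ (v j * v (τ j)).val := by
  have heven : Even (Finset.univ.filter fun j => τ j ≠ j ∧ v j = 1 ∧ v (τ j) = 1).card := by
    apply even_card_of_involutive hτ <;> simp +contextual [hτ _, eq_comm]
  rw [prod_pow_zmod_two_val, Finset.filter_filter]
  simp only [zmod_two_mul_eq_one_iff]
  rw [orbitCount, ← Complex.I_sq, ← pow_mul, Nat.mul_div_cancel' heven.two_dvd]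

lemma Sop_eq_diagonal (hτ : Function.Involutive τ) (hAB : Disjoint A B)
    (hF : A ∪ B = Finset.univ.filter fun j => τ j = j) :
    Sop τ A B = Matrix.diagonal (involutionPhase (qubitWeight B) τ) := by
  have hfixed {j : q} (hj : j ∈ A ∪ B) : τ j = j := by simpa [hF] using hj
  have prod_eq {C : Finset q} {c : ℂ} (hC : C ⊆ A ∪ B) (hc : ∀ j ∈ C, qubitWeight B j = c)
      (v : q → ZMod 2) :
      ∏ j ∈ C, qubitWeight B j ^ (v j * v (τ j)).val = c ^ (C.filter fun j => v j = 1).card := by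
    rw [← prod_pow_zmod_two_val]
    refine Finset.prod_congr rfl fun j hj => ?_
    rw [hc j hj, hfixed (hC hj), zmod_two_mul_self]
  rw [Sop]
  congr 1
  ext v
  rw [involutionPhase, ← Finset.prod_filter_mul_prod_filter_not _ (fun j => τ j = j), ← hF,
    Finset.prod_union hAB,
    prod_eq Finset.subset_union_left fun j hj => if_neg (Finset.disjoint_left.1 hAB hj),
    prod_eq Finset.subset_union_right fun j hj => if_pos hj, neg_one_pow_orbitCount hτ]
  congr 1
  refine Finset.prod_congr rfl fun j hj => ?_
  rw [qubitWeight, if_neg fun hjB =>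
    (Finset.mem_filter.1 hj).2 (hfixed (Finset.mem_union_right A hjB))]

lemma diagonal_mul_PX (d : (q → ZMod 2) → ℂ) (s : q → ZMod 2) :
    Matrix.diagonal d * PX s = PX s * Matrix.diagonal fun v => d (v + s) := by
  ext u v
  rw [Matrix.diagonal_mul, Matrix.mul_diagonal, PX]
  split_ifs with h <;> simp [h]

theorem Sop_mul_PX (hτ : Function.Involutive τ) (hAB : Disjoint A B)
    (hF : A ∪ B = Finset.univ.filter fun j => τ j = j) (s : q → ZMod 2) :
    Sop τ A B * PX s = Sop τ A B s s • (PX s * PZ (s ∘ τ) * Sop τ A B) := by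
  have hB (j : q) (hj : j ∈ B) : τ j = j := by
    simpa [hF] using Finset.mem_union_right A hj
  rw [Sop_eq_diagonal hτ hAB hF, diagonal_mul_PX, PZ, Matrix.mul_assoc,
    Matrix.diagonal_mul_diagonal, ← Matrix.mul_smul, Matrix.diagonal_apply_eq,
    ← Matrix.diagonal_smul]
  congr 2
  ext v
  rw [involutionPhase_add hτ (qubitWeight_sq B) (qubitWeight_perm_apply hB)]
  simp only [Pi.smul_apply, smul_eq_mul, Function.comp_apply]
  ring

lemma Sop_apply_self_eq_one {s : q → ZMod 2}
    (hcard : ((Finset.univ.filter fun j => s j = 1) ∩ A).card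
      = ((Finset.univ.filter fun j => s j = 1) ∩ B).card)
    (heven : Even (orbitCount τ s)) : Sop τ A B s s = 1 := by
  simp only [Finset.filter_inter, Finset.univ_inter] at hcard
  rw [Sop, Matrix.diagonal_apply_eq, hcard, ← mul_pow, heven.neg_one_pow]
  simp

lemma isUnit_Sop (τ : Equiv.Perm q) (A B : Finset q) : IsUnit (Sop τ A B) := by
  simp [Sop, Matrix.isUnit_diagonal, Pi.isUnit_iff]

lemma isUnit_PZ (s : q → ZMod 2) : IsUnit (PZ s) := by
  simp [PZ, Matrix.isUnit_diagonal, Pi.isUnit_iff, Finset.prod_ne_zero_iff]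

lemma commute_Sop_PZ (τ : Equiv.Perm q) (A B : Finset q) (s : q → ZMod 2) :
    Commute (Sop τ A B) (PZ s) :=
  Matrix.commute_diagonal _ _

end PhaseTypeOperator

lemma IsZXDuality.row_eq_comp {ι rX rZ : Type*} {HX : Matrix rX ι (ZMod 2)}
    {HZ : Matrix rZ ι (ZMod 2)} {τn : ι ≃ ι} {τX : rX ≃ rZ} {τZ : rZ ≃ rX}
    (h : IsZXDuality HX HZ τn τX τZ) (hτ : Function.Involutive τn) (i : rX) :
    HZ (τX i) = HX i ∘ τn := by
  ext j
  rw [Function.comp_apply, ← h.1, hτ]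

theorem phaseType_logical_gate_general {rX rZ : Type*}
    (HX : Matrix rX q (ZMod 2)) (HZ : Matrix rZ q (ZMod 2))
    {τ : Equiv.Perm q} (hτ : Function.Involutive τ)
    (hrow : ∀ i, ∃ k, HZ k = HX i ∘ τ)
    {A B : Finset q} (hAB : Disjoint A B)
    (hF : A ∪ B = Finset.univ.filter fun j => τ j = j)
    (hphase : ∀ i, Sop τ A B (HX i) (HX i) = 1) :
    ∃ Su : (Matrix (q → ZMod 2) (q → ZMod 2) ℂ)ˣ,
      (Su : Matrix (q → ZMod 2) (q → ZMod 2) ℂ) = Sop τ A B ∧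
      Subgroup.map (MulAut.conj Su).toMonoidHom (stabilizer HX HZ) = stabilizer HX HZ := by
  obtain ⟨Su, hSu⟩ := isUnit_Sop τ A B
  have conj_fixes_Z {W : (Matrix (q → ZMod 2) (q → ZMod 2) ℂ)ˣ} {s : q → ZMod 2}
      (hW : (W : Matrix (q → ZMod 2) (q → ZMod 2) ℂ) = PZ s) : MulAut.conj Su W = W := by
    rw [MulAut.conj_apply, mul_inv_eq_iff_eq_mul]
    apply Units.ext
    rw [Units.val_mul, Units.val_mul, hSu, hW, (commute_Sop_PZ τ A B s).eq]
  refine ⟨Su, hSu, map_closure_eq_closure_of_map_eq_mul _ ?_⟩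
  rintro U (⟨i, hU⟩ | ⟨k, hU⟩)
  · obtain ⟨k, hk⟩ := hrow i
    obtain ⟨W, hW⟩ := isUnit_PZ (HZ k)
    refine ⟨W, Subgroup.subset_closure (Or.inr ⟨k, hW⟩), conj_fixes_Z hW, ?_⟩
    change Su * U * Su⁻¹ = U * W
    rw [mul_inv_eq_iff_eq_mul]
    apply Units.ext
    simp only [Units.val_mul, hSu, hU, hW, hk, Sop_mul_PX hτ hAB hF, hphase, one_smul]
  · exact ⟨1, one_mem _, map_one _, (conj_fixes_Z hU).trans (mul_one U).symm⟩

/-- If the CSS code `(H_X, H_Z)` has a ZX-duality whose qubit permutation `τ_n` is an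
involution, and the fixed-point set of `τ_n` is partitioned as `A ⊔ B` so that every row
`s` of `H_X` satisfies `|supp(s) ∩ A| = |supp(s) ∩ B|` and contains an even number of
two-element orbits of `τ_n`, then conjugation by the phase-type operator `S_{τ_n}` maps
the stabilizer group onto itself; in particular `S_{τ_n}` is an encoded logical gate. -/
theorem phaseType_logical_gate {n rX rZ : ℕ}
    (HX : Matrix (Fin rX) (Fin n) (ZMod 2)) (HZ : Matrix (Fin rZ) (Fin n) (ZMod 2))
    (hCSS : HX * HZ.transpose = 0)
    (τn : Equiv.Perm (Fin n)) (τX : Fin rX ≃ Fin rZ) (τZ : Fin rZ ≃ Fin rX)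
    (hτ : IsZXDuality HX HZ τn τX τZ)
    (hτ2 : τn * τn = 1)
    (A B : Finset (Fin n)) (hAB : Disjoint A B)
    (hF : A ∪ B = Finset.univ.filter fun j => τn j = j)
    (h1 : ∀ i : Fin rX,
      ((Finset.univ.filter fun j => HX i j = 1) ∩ A).card
        = ((Finset.univ.filter fun j => HX i j = 1) ∩ B).card)
    (h2 : ∀ i : Fin rX, Even (orbitCount τn (HX i))) :
    ∃ Su : (Matrix (Fin n → ZMod 2) (Fin n → ZMod 2) ℂ)ˣ,
      (Su : Matrix (Fin n → ZMod 2) (Fin n → ZMod 2) ℂ) = Sop τn A B ∧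
      Subgroup.map (MulAut.conj Su).toMonoidHom (stabilizer HX HZ) = stabilizer HX HZ := by
  have hinv : Function.Involutive τn := Equiv.congr_fun hτ2
  exact phaseType_logical_gate_general HX HZ hinv (fun i => ⟨τX i, hτ.row_eq_comp hinv i⟩) hAB hF
    fun i => Sop_apply_self_eq_one (h1 i) (h2 i)

end Stmt11
end

section
/- Let (H_X, H_Z) be a CSS code with parameters (n, r_X, r_Z) admitting a ZX-duality (τ_n, τ_X, τ_Z) with τ_n an involution (τ_n² = id). Consider the direct sum code C ⊕ C on qubit index set Fin n ⊕ Fin n, and let CZ_τ be the diagonal 2^{2n} × 2^{2n} matrix, indexed by basis states v : (Fin n ⊕ Fin n) → ZMod 2, whose entry at v is ∏_{j : Fin n} (-1)^{v(inl j) · v(inr (τ_n j))}. Then conjugation by CZ_τ maps the stabilizer group of C ⊕ C onto itself; in particular CZ_τ is an encoded logical gate for C ⊕ C. -/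
namespace Stmt12

variable {q : Type*} [Fintype q] [DecidableEq q]

/-- The Pauli operator `X^s`: entry 1 at `(u, v)` iff `u = v + s`. -/
noncomputable def PX (s : q → ZMod 2) : Matrix (q → ZMod 2) (q → ZMod 2) ℂ :=
  fun u v => if u = v + s then 1 else 0

/-- The Pauli operator `Z^s`: diagonal with entry `∏_j (-1)^{s_j v_j}` at `v`. -/
noncomputable def PZ (s : q → ZMod 2) : Matrix (q → ZMod 2) (q → ZMod 2) ℂ :=
  Matrix.diagonal fun v => ∏ j, (-1 : ℂ) ^ ((s j).val * (v j).val)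

/-- A ZX-duality of a CSS code `(H_X, H_Z)`. -/
def IsZXDuality {q rX rZ : Type*} (HX : Matrix rX q (ZMod 2)) (HZ : Matrix rZ q (ZMod 2))
    (τn : q ≃ q) (τX : rX ≃ rZ) (τZ : rZ ≃ rX) : Prop :=
  (∀ i j, HZ (τX i) (τn j) = HX i j) ∧ (∀ i j, HX (τZ i) (τn j) = HZ i j)

/-- The stabilizer group of the CSS code `(H_X, H_Z)`. -/
noncomputable def stabilizer {rX rZ : Type*} (HX : Matrix rX q (ZMod 2))
    (HZ : Matrix rZ q (ZMod 2)) :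
    Subgroup (Matrix (q → ZMod 2) (q → ZMod 2) ℂ)ˣ :=
  Subgroup.closure
    {U | (∃ i, (U : Matrix (q → ZMod 2) (q → ZMod 2) ℂ) = PX (HX i)) ∨
         (∃ i, (U : Matrix (q → ZMod 2) (q → ZMod 2) ℂ) = PZ (HZ i))}

/-- The stacked `CZ` operator `CZ_τ` on `C ⊕ C`: the diagonal matrix whose entry at a
basis state `v : (Fin n ⊕ Fin n) → ZMod 2` is `∏_j (-1)^{v(inl j) · v(inr (τ j))}`. -/
noncomputable def CZop {n : ℕ} (τ : Equiv.Perm (Fin n)) :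
    Matrix ((Fin n ⊕ Fin n) → ZMod 2) ((Fin n ⊕ Fin n) → ZMod 2) ℂ :=
  Matrix.diagonal fun v =>
    ∏ j : Fin n, (-1 : ℂ) ^ ((v (Sum.inl j)).val * (v (Sum.inr (τ j))).val)

/-!
`CZ_τ` is the diagonal gate `(-1)^f` of the quadratic form `f v = ∑ j, v (inl j) * v (inr (τ j))`.
A diagonal gate commutes with every `Z^t`, and moving `(-1)^f` past `X^s` replaces `f` by its
translate `v ↦ f (v + s)`. When `s` is supported on one summand, `f (v + s) - f v` is the linear
form `v ↦ t ⬝ᵥ v`, where `t` is `s` transported along `τ` to the other summand, so `X^s` is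
conjugated to `X^s Z^t`. The ZX-duality makes `t` a row of the `Z`-check matrix whenever `s` is a
row of the `X`-check matrix. Finally `CZ_τ` squares to the identity, so mapping the stabilizer group
into itself is the same as mapping it onto itself.
-/

theorem map_conj_eq_self_of_mul_self_eq_one {G : Type*} [Group G] {g : G} (hg : g * g = 1)
    {S : Subgroup G} (hS : S.map (MulAut.conj g).toMonoidHom ≤ S) :
    S.map (MulAut.conj g).toMonoidHom = S := by
  refine le_antisymm hS fun x hx => ⟨g * x * g⁻¹, hS ⟨x, hx, rfl⟩, ?_⟩
  change g * (g * x * g⁻¹) * g⁻¹ = x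
  rw [← mul_assoc, ← mul_assoc, hg, one_mul, mul_assoc, ← mul_inv_rev, hg, inv_one, mul_one]

theorem addChar_sum {A M κ : Type*} [AddCommMonoid A] [CommMonoid M] (ψ : AddChar A M)
    (s : Finset κ) (a : κ → A) : ψ (∑ j ∈ s, a j) = ∏ j ∈ s, ψ (a j) :=
  map_prod ψ.toMonoidHom (fun j => Multiplicative.ofAdd (a j)) s

/-- The sign character `a ↦ (-1)^a` of `ZMod 2`, with values in `ℂ`. -/
noncomputable def signChar : AddChar (ZMod 2) ℂ :=
  AddChar.zmodChar 2 neg_one_sq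

theorem signChar_mul (a b : ZMod 2) : signChar (a * b) = (-1) ^ (a.val * b.val) := by
  rw [signChar, ← AddChar.zmodChar_apply' neg_one_sq, Nat.cast_mul, ZMod.natCast_zmod_val,
    ZMod.natCast_zmod_val]

theorem signChar_mul_self (a : ZMod 2) : signChar a * signChar a = 1 := by
  rw [← AddChar.map_add_eq_mul, CharTwo.add_self_eq_zero, AddChar.map_zero_eq_one]

theorem signChar_dotProduct {κ : Type*} [Fintype κ] (s t : κ → ZMod 2) :
    signChar (s ⬝ᵥ t) = ∏ j, (-1) ^ ((s j).val * (t j).val) := by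
  simp only [dotProduct, addChar_sum, signChar_mul]

section SignDiag

variable {ι : Type*} [Fintype ι] [DecidableEq ι]

/-- The diagonal gate `(-1)^f` of a phase function `f : ι → ZMod 2`, as an invertible matrix that is
its own inverse. -/
noncomputable def signDiag (f : ι → ZMod 2) : (Matrix ι ι ℂ)ˣ :=
  have mul_self : (Matrix.diagonal fun i => signChar (f i)) *
      (Matrix.diagonal fun i => signChar (f i)) = 1 := by
    simp only [Matrix.diagonal_mul_diagonal, signChar_mul_self, Matrix.diagonal_one]
  ⟨_, _, mul_self, mul_self⟩

theorem coe_signDiag (f : ι → ZMod 2) :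
    (signDiag f : Matrix ι ι ℂ) = Matrix.diagonal fun i => signChar (f i) :=
  rfl

theorem signDiag_mul_self (f : ι → ZMod 2) : signDiag f * signDiag f = 1 :=
  mul_inv_cancel (signDiag f)

theorem signDiag_add (f g : ι → ZMod 2) : signDiag (f + g) = signDiag f * signDiag g := by
  ext1
  simp only [Units.val_mul, coe_signDiag, Matrix.diagonal_mul_diagonal, Pi.add_apply,
    AddChar.map_add_eq_mul]

theorem signDiag_commute (f g : ι → ZMod 2) : Commute (signDiag f) (signDiag g) := by
  rw [commute_iff_eq, ← signDiag_add, add_comm, signDiag_add]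

end SignDiag

section Stabilizer

variable {rX rZ : Type*} {HX : Matrix rX q (ZMod 2)} {HZ : Matrix rZ q (ZMod 2)}

theorem PZ_eq_signDiag (t : q → ZMod 2) : PZ t = signDiag (t ⬝ᵥ ·) := by
  simp only [PZ, coe_signDiag, signChar_dotProduct]

theorem signDiag_row_mem_stabilizer (k : rZ) : signDiag (HZ k ⬝ᵥ ·) ∈ stabilizer HX HZ :=
  Subgroup.subset_closure (Or.inr ⟨k, (PZ_eq_signDiag _).symm⟩)

theorem signDiag_mul_PX (f : (q → ZMod 2) → ZMod 2) (s : q → ZMod 2) :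
    (signDiag f : Matrix _ _ ℂ) * PX s = PX s * (signDiag fun v => f (v + s) : Matrix _ _ ℂ) := by
  ext u v
  rw [coe_signDiag, coe_signDiag, Matrix.diagonal_mul, Matrix.mul_diagonal, PX]
  split_ifs with huv
  · rw [huv, mul_comm]
  · rw [mul_zero, zero_mul]

theorem signDiag_conj_of_coe_eq_PX {f g : (q → ZMod 2) → ZMod 2} {s : q → ZMod 2}
    (hf : ∀ v, f (v + s) = f v + g v) {U : (Matrix (q → ZMod 2) (q → ZMod 2) ℂ)ˣ}
    (hU : (U : Matrix (q → ZMod 2) (q → ZMod 2) ℂ) = PX s) :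
    signDiag f * U * (signDiag f)⁻¹ = U * signDiag g := by
  have translate : signDiag f * U = U * signDiag (f + g) := by
    ext1
    rw [Units.val_mul, Units.val_mul, hU, signDiag_mul_PX, funext hf]
    rfl
  rw [translate, add_comm, signDiag_add, ← mul_assoc, mul_inv_cancel_right]

theorem map_conj_signDiag_stabilizer {f : (q → ZMod 2) → ZMod 2}
    (hf : ∀ i, ∃ k, ∀ v, f (v + HX i) = f v + HZ k ⬝ᵥ v) :
    (stabilizer HX HZ).map (MulAut.conj (signDiag f)).toMonoidHom = stabilizer HX HZ := by
  refine map_conj_eq_self_of_mul_self_eq_one (signDiag_mul_self f) ?_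
  rw [Subgroup.map_le_iff_le_comap, stabilizer, Subgroup.closure_le]
  intro U hU
  have hU_mem : U ∈ stabilizer HX HZ := Subgroup.subset_closure hU
  change signDiag f * U * (signDiag f)⁻¹ ∈ stabilizer HX HZ
  rcases hU with ⟨i, hX⟩ | ⟨i, hZ⟩
  · obtain ⟨k, hk⟩ := hf i
    rw [signDiag_conj_of_coe_eq_PX hk hX]
    exact mul_mem hU_mem (signDiag_row_mem_stabilizer k)
  · obtain rfl : U = signDiag (HZ i ⬝ᵥ ·) := Units.ext (hZ.trans (PZ_eq_signDiag _))
    rwa [(signDiag_commute _ _).eq, mul_inv_cancel_right]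

end Stabilizer

section CrossPairing

variable {κ ν R : Type*} [Fintype κ]

theorem sumElim_zero_left_dotProduct [Fintype ν] [NonUnitalNonAssocSemiring R] (s : ν → R)
    (v : κ ⊕ ν → R) : Sum.elim 0 s ⬝ᵥ v = s ⬝ᵥ (v ∘ Sum.inr) := by
  conv_lhs => rw [← Sum.elim_comp_inl_inr v]
  rw [sumElim_dotProduct_sumElim, zero_dotProduct, zero_add]

theorem sumElim_zero_right_dotProduct [Fintype ν] [NonUnitalNonAssocSemiring R] (s : κ → R)
    (v : κ ⊕ ν → R) : Sum.elim s 0 ⬝ᵥ v = s ⬝ᵥ (v ∘ Sum.inl) := by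
  conv_lhs => rw [← Sum.elim_comp_inl_inr v]
  rw [sumElim_dotProduct_sumElim, zero_dotProduct, add_zero]

/-- The quadratic form `v ↦ ∑ j, v (inl j) * v (inr (τ j))` on `κ ⊕ ν`, which pairs the two
summands along the bijection `τ`; over `ZMod 2` it is the phase function of `CZ_τ`. -/
def crossPairing [NonUnitalNonAssocSemiring R] (τ : κ ≃ ν) (v : κ ⊕ ν → R) : R :=
  (v ∘ Sum.inl) ⬝ᵥ (v ∘ Sum.inr ∘ τ)

theorem crossPairing_add_sumElim_zero_right [Fintype ν] [NonUnitalNonAssocSemiring R] (τ : κ ≃ ν)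
    (v : κ ⊕ ν → R) (s : κ → R) :
    crossPairing τ (v + Sum.elim s 0) = crossPairing τ v + Sum.elim 0 (s ∘ τ.symm) ⬝ᵥ v := by
  have inl_add : (v + Sum.elim s 0) ∘ Sum.inl = v ∘ Sum.inl + s := rfl
  have inr_add : (v + Sum.elim s 0) ∘ Sum.inr ∘ τ = v ∘ Sum.inr ∘ τ :=
    funext fun _ => add_zero _
  have pairing_v : Sum.elim 0 (s ∘ τ.symm) ⬝ᵥ v = s ⬝ᵥ (v ∘ Sum.inr ∘ τ) := by
    rw [sumElim_zero_left_dotProduct, comp_equiv_symm_dotProduct, Function.comp_assoc]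
  rw [crossPairing, inl_add, inr_add, add_dotProduct, pairing_v, crossPairing]

theorem crossPairing_add_sumElim_zero_left [Fintype ν] [NonUnitalCommSemiring R] (τ : κ ≃ ν)
    (v : κ ⊕ ν → R) (s : ν → R) :
    crossPairing τ (v + Sum.elim (0 : κ → R) s) = crossPairing τ v + Sum.elim (s ∘ τ) 0 ⬝ᵥ v := by
  have inl_add : (v + Sum.elim (0 : κ → R) s) ∘ Sum.inl = v ∘ Sum.inl :=
    funext fun _ => add_zero _
  have inr_add : (v + Sum.elim (0 : κ → R) s) ∘ Sum.inr ∘ τ = v ∘ Sum.inr ∘ τ + s ∘ τ := rfl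
  have pairing_v : Sum.elim (s ∘ τ) 0 ⬝ᵥ v = (v ∘ Sum.inl) ⬝ᵥ (s ∘ τ) := by
    rw [sumElim_zero_right_dotProduct, dotProduct_comm]
  rw [crossPairing, inl_add, inr_add, dotProduct_add, pairing_v, crossPairing]

end CrossPairing

section ZXDuality

variable {p rX rZ : Type*} {HX : Matrix rX p (ZMod 2)} {HZ : Matrix rZ p (ZMod 2)}
  {τn : p ≃ p} {τX : rX ≃ rZ} {τZ : rZ ≃ rX}

theorem IsZXDuality.row_comp_symm (hτ : IsZXDuality HX HZ τn τX τZ) (i : rX) :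
    HX i ∘ τn.symm = HZ (τX i) := by
  rw [Equiv.comp_symm_eq]
  exact funext fun j => (hτ.1 i j).symm

theorem IsZXDuality.row_comp (hτ : IsZXDuality HX HZ τn τX τZ) (i : rX) :
    HX i ∘ τn = HZ (τZ.symm i) := by
  ext j
  rw [← hτ.2, τZ.apply_symm_apply, Function.comp_apply]

theorem IsZXDuality.exists_crossPairing_add_row [Fintype p] (hτ : IsZXDuality HX HZ τn τX τZ)
    (i : rX ⊕ rX) :
    ∃ k, ∀ v, crossPairing τn (v + Matrix.fromBlocks HX 0 0 HX i) =
      crossPairing τn v + Matrix.fromBlocks HZ 0 0 HZ k ⬝ᵥ v := by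
  rcases i with i | i
  · refine ⟨Sum.inr (τX i), fun v => ?_⟩
    have h := crossPairing_add_sumElim_zero_right τn v (HX i)
    rwa [hτ.row_comp_symm] at h
  · refine ⟨Sum.inl (τZ.symm i), fun v => ?_⟩
    have h := crossPairing_add_sumElim_zero_left τn v (HX i)
    rwa [hτ.row_comp] at h

end ZXDuality

/-- The stacked gate `CZ_τ` on two copies of an arbitrary finite qubit set `q`, as an invertible
matrix. -/
noncomputable def stackedCZ (τ : Equiv.Perm q) :
    (Matrix (q ⊕ q → ZMod 2) (q ⊕ q → ZMod 2) ℂ)ˣ :=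
  signDiag (crossPairing τ)

theorem coe_stackedCZ {n : ℕ} (τ : Equiv.Perm (Fin n)) :
    (stackedCZ τ : Matrix (Fin n ⊕ Fin n → ZMod 2) (Fin n ⊕ Fin n → ZMod 2) ℂ) = CZop τ := by
  simp only [stackedCZ, coe_signDiag, crossPairing, signChar_dotProduct, CZop, Function.comp_apply]

theorem stacked_cz_logical_gate_general {rX rZ : Type*}
    (HX : Matrix rX q (ZMod 2)) (HZ : Matrix rZ q (ZMod 2))
    (τn : Equiv.Perm q) (τX : rX ≃ rZ) (τZ : rZ ≃ rX) (hτ : IsZXDuality HX HZ τn τX τZ) :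
    Subgroup.map (MulAut.conj (stackedCZ τn)).toMonoidHom
        (stabilizer (Matrix.fromBlocks HX 0 0 HX) (Matrix.fromBlocks HZ 0 0 HZ))
      = stabilizer (Matrix.fromBlocks HX 0 0 HX) (Matrix.fromBlocks HZ 0 0 HZ) :=
  map_conj_signDiag_stabilizer hτ.exists_crossPairing_add_row

/-- If the CSS code `C = (H_X, H_Z)` has a ZX-duality whose qubit permutation `τ_n` is an
involution, then conjugation by `CZ_τ` maps the stabilizer group of the direct sum code
`C ⊕ C` onto itself; in particular `CZ_τ` is an encoded logical gate for `C ⊕ C`. -/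
theorem stacked_cz_logical_gate {n rX rZ : ℕ}
    (HX : Matrix (Fin rX) (Fin n) (ZMod 2)) (HZ : Matrix (Fin rZ) (Fin n) (ZMod 2))
    (hCSS : HX * HZ.transpose = 0)
    (τn : Equiv.Perm (Fin n)) (τX : Fin rX ≃ Fin rZ) (τZ : Fin rZ ≃ Fin rX)
    (hτ : IsZXDuality HX HZ τn τX τZ)
    (hτ2 : τn * τn = 1) :
    ∃ CU : (Matrix ((Fin n ⊕ Fin n) → ZMod 2) ((Fin n ⊕ Fin n) → ZMod 2) ℂ)ˣ,
      (CU : Matrix ((Fin n ⊕ Fin n) → ZMod 2) ((Fin n ⊕ Fin n) → ZMod 2) ℂ) = CZop τn ∧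
      Subgroup.map (MulAut.conj CU).toMonoidHom
          (stabilizer (Matrix.fromBlocks HX 0 0 HX) (Matrix.fromBlocks HZ 0 0 HZ))
        = stabilizer (Matrix.fromBlocks HX 0 0 HX) (Matrix.fromBlocks HZ 0 0 HZ) :=
  ⟨stackedCZ τn, coe_stackedCZ τn, stacked_cz_logical_gate_general HX HZ τn τX τZ hτ⟩

end Stmt12
end

section
/- The presented group on three generators a, b, c with relations a², b², c², (ab)³, (ac)², (bc)³ is isomorphic to the symmetric group S₄ (i.e., Equiv.Perm (Fin 4)). -/
namespace Stmt15

/-- The free-group generators `a`, `b`, `c`. -/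
def a : FreeGroup (Fin 3) := FreeGroup.of 0
def b : FreeGroup (Fin 3) := FreeGroup.of 1
def c : FreeGroup (Fin 3) := FreeGroup.of 2

/-- Relators of the Coxeter reflection group `R₃,₃ = ⟨a, b, c | a², b², c², (ab)³, (ac)², (bc)³⟩`. -/
def rels33 : Set (FreeGroup (Fin 3)) :=
  {a ^ 2, b ^ 2, c ^ 2, (a * b) ^ 3, (a * c) ^ 2, (b * c) ^ 3}

/-!
The relators are the Coxeter relations of type `A₃`, which the adjacent transpositions of `Fin 4`
satisfy and which thus define a surjection onto `S₄`. It is injective by counting: in any group, let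
`s₀, …, sₙ` satisfy the relations of type `A`, and let `H` be the subgroup generated by
`s₀, …, sₙ₋₁`. Left multiplication by a generator permutes the `n + 2` cosets `sₖ sₖ₊₁ ⋯ sₙ H`,
`0 ≤ k ≤ n + 1`, so these cover the subgroup generated by `s₀, …, sₙ`, and induction on `n` bounds
its order by `(n + 2)!`.
-/

open Equiv Subgroup
open scoped Pointwise Nat Cardinal

section Involutions

variable {G : Type*} [Group G] {x y : G}

lemma inv_eq_self_of_sq_eq_one (hx : x ^ 2 = 1) : x⁻¹ = x :=
  inv_eq_of_mul_eq_one_left (by rwa [← sq])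

lemma commute_of_sq_eq_one (hx : x ^ 2 = 1) (hy : y ^ 2 = 1) (hxy : (x * y) ^ 2 = 1) :
    Commute x y :=
  calc x * y = (x * y)⁻¹ := (inv_eq_self_of_sq_eq_one hxy).symm
    _ = y * x := by
      rw [mul_inv_rev, inv_eq_self_of_sq_eq_one hx, inv_eq_self_of_sq_eq_one hy]

lemma braid_of_mul_pow_three_eq_one (hx : x ^ 2 = 1) (hy : y ^ 2 = 1) (hxy : (x * y) ^ 3 = 1) :
    x * y * x = y * x * y := by
  have mul_eq_one : x * y * x * (y * x * y) = 1 := by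
    rw [← hxy, pow_three]
    simp only [mul_assoc]
  calc x * y * x = (y * x * y)⁻¹ := eq_inv_of_mul_eq_one_left mul_eq_one
    _ = y * x * y := by
      rw [mul_inv_rev, mul_inv_rev, inv_eq_self_of_sq_eq_one hx, inv_eq_self_of_sq_eq_one hy,
        mul_assoc]

end Involutions

section ConsecutiveProd

variable {M : Type*} [Monoid M] (s : ℕ → M)

/-- The product `s k * s (k + 1) * ⋯ * s (k + m - 1)` of `m` consecutive terms of a sequence. -/
def consecutiveProd (k m : ℕ) : M := ((List.range' k m).map s).prod

lemma consecutiveProd_zero (k : ℕ) : consecutiveProd s k 0 = 1 := rfl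

lemma consecutiveProd_succ (k m : ℕ) :
    consecutiveProd s k (m + 1) = s k * consecutiveProd s (k + 1) m := by
  simp [consecutiveProd, List.range'_succ]

/-- The `n + 1` products `s k * s (k + 1) * ⋯ * s (n - 1)` with `0 ≤ k ≤ n`. -/
def suffixProds (n : ℕ) : Set M :=
  Set.range fun k : Fin (n + 1) ↦ consecutiveProd s k (n - k)

lemma mk_suffixProds_le (n : ℕ) : #(suffixProds s n) ≤ (n + 1 : ℕ) := by
  simpa [suffixProds] using
    Cardinal.mk_range_le_lift (f := fun k : Fin (n + 1) ↦ consecutiveProd s k (n - k))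

variable {s}

lemma mem_suffixProds_iff {g : M} {n : ℕ} :
    g ∈ suffixProds s n ↔ ∃ k m, k + m = n ∧ consecutiveProd s k m = g := by
  constructor
  · rintro ⟨k, rfl⟩
    exact ⟨k, n - k, by lia, rfl⟩
  · rintro ⟨k, m, rfl, rfl⟩
    exact ⟨⟨k, by lia⟩, by simp only [Nat.add_sub_cancel_left]⟩

lemma consecutiveProd_mem_suffixProds {k m n : ℕ} (hkm : k + m = n) :
    consecutiveProd s k m ∈ suffixProds s n :=
  mem_suffixProds_iff.2 ⟨k, m, hkm, rfl⟩

lemma one_mem_suffixProds (n : ℕ) : 1 ∈ suffixProds s n :=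
  mem_suffixProds_iff.2 ⟨n, 0, add_zero n, consecutiveProd_zero s n⟩

end ConsecutiveProd

/-- The Coxeter relations of type `Aₙ` (those of the adjacent transpositions in `Sₙ₊₁`) for the
elements `s 0, …, s (n - 1)` of a group. The values `s i` with `n ≤ i` are junk; indexing by `ℕ`
rather than `Fin n` lets the same `s` serve for all smaller ranks. -/
structure IsCoxeterTypeA {G : Type*} [Group G] (s : ℕ → G) (n : ℕ) : Prop where
  sq_eq_one : ∀ i < n, s i ^ 2 = 1
  mul_succ_pow_three_eq_one : ∀ i, i + 1 < n → (s i * s (i + 1)) ^ 3 = 1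
  mul_sq_eq_one : ∀ i j, i + 1 < j → j < n → (s i * s j) ^ 2 = 1

namespace IsCoxeterTypeA

variable {G : Type*} [Group G] {s : ℕ → G} {n : ℕ}

lemma of_succ (hs : IsCoxeterTypeA s (n + 1)) : IsCoxeterTypeA s n where
  sq_eq_one i hi := hs.sq_eq_one i (by lia)
  mul_succ_pow_three_eq_one i hi := hs.mul_succ_pow_three_eq_one i (by lia)
  mul_sq_eq_one i j hij hj := hs.mul_sq_eq_one i j hij (by lia)

lemma commute (hs : IsCoxeterTypeA s n) {i j : ℕ} (hij : i + 1 < j) (hj : j < n) :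
    Commute (s i) (s j) :=
  commute_of_sq_eq_one (hs.sq_eq_one i (by lia)) (hs.sq_eq_one j hj) (hs.mul_sq_eq_one i j hij hj)

lemma braid (hs : IsCoxeterTypeA s n) {i : ℕ} (hi : i + 1 < n) :
    s i * s (i + 1) * s i = s (i + 1) * s i * s (i + 1) :=
  braid_of_mul_pow_three_eq_one (hs.sq_eq_one i (by lia)) (hs.sq_eq_one _ hi)
    (hs.mul_succ_pow_three_eq_one i hi)

lemma commute_consecutiveProd (hs : IsCoxeterTypeA s n) {j k m : ℕ} (hjk : j + 1 < k)
    (hkm : k + m ≤ n) : Commute (s j) (consecutiveProd s k m) := by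
  refine Commute.list_prod_right _ _ fun x hx ↦ ?_
  obtain ⟨i, hi, rfl⟩ := List.mem_map.1 hx
  rw [List.mem_range'_1] at hi
  exact hs.commute (by lia) (by lia)

lemma mul_consecutiveProd_eq_consecutiveProd_mul (hs : IsCoxeterTypeA s n) {j k m : ℕ}
    (hkj : k ≤ j) (hj : j + 1 < k + m) (hkm : k + m ≤ n) :
    s (j + 1) * consecutiveProd s k m = consecutiveProd s k m * s j := by
  induction m generalizing k with
  | zero => lia
  | succ m ih =>
    obtain rfl | hkj := hkj.eq_or_lt
    · obtain ⟨m, rfl⟩ : ∃ l, m = l + 1 := ⟨m - 1, by lia⟩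
      have comm : s k * consecutiveProd s (k + 2) m = consecutiveProd s (k + 2) m * s k :=
        hs.commute_consecutiveProd (by lia) (by lia)
      simp only [consecutiveProd_succ]
      calc s (k + 1) * (s k * (s (k + 1) * consecutiveProd s (k + 2) m))
          = s (k + 1) * s k * s (k + 1) * consecutiveProd s (k + 2) m := by simp only [mul_assoc]
        _ = s k * s (k + 1) * (s k * consecutiveProd s (k + 2) m) := by
          rw [← hs.braid (by lia), mul_assoc]
        _ = s k * (s (k + 1) * consecutiveProd s (k + 2) m) * s k := by
          rw [comm]; simp only [mul_assoc]
    · have comm : s (j + 1) * s k = s k * s (j + 1) := (hs.commute (by lia) (by lia)).symm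
      rw [consecutiveProd_succ, ← mul_assoc, comm, mul_assoc, ih hkj (by lia) (by lia), mul_assoc]

lemma mul_mem_suffixProds_mul_closure (hs : IsCoxeterTypeA s (n + 1)) {j : ℕ} (hj : j < n + 1)
    {g : G} (hg : g ∈ suffixProds s (n + 1)) :
    s j * g ∈ suffixProds s (n + 1) * (closure (s '' Set.Iio n) : Set G) := by
  have mem_closure {i : ℕ} (hi : i < n) : s i ∈ (closure (s '' Set.Iio n) : Set G) :=
    subset_closure (Set.mem_image_of_mem s hi)
  have subset_mul : suffixProds s (n + 1) ⊆
      suffixProds s (n + 1) * (closure (s '' Set.Iio n) : Set G) :=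
    Set.subset_mul_left _ (one_mem (Subgroup.closure _))
  obtain ⟨k, m, hkm, rfl⟩ := mem_suffixProds_iff.1 hg
  obtain hjk | rfl | rfl | hkj : j + 1 < k ∨ j + 1 = k ∨ j = k ∨ k < j := by lia
  · rw [hs.commute_consecutiveProd hjk hkm.le]
    exact Set.mul_mem_mul (consecutiveProd_mem_suffixProds hkm) (mem_closure (by lia))
  · rw [← consecutiveProd_succ]
    exact subset_mul (consecutiveProd_mem_suffixProds (by lia))
  · obtain ⟨m, rfl⟩ : ∃ l, m = l + 1 := ⟨m - 1, by lia⟩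
    rw [consecutiveProd_succ, ← mul_assoc, ← sq, hs.sq_eq_one j hj, one_mul]
    exact subset_mul (consecutiveProd_mem_suffixProds (by lia))
  · obtain ⟨i, rfl⟩ : ∃ i, j = i + 1 := ⟨j - 1, by lia⟩
    rw [hs.mul_consecutiveProd_eq_consecutiveProd_mul (by lia) (by lia) hkm.le]
    exact Set.mul_mem_mul (consecutiveProd_mem_suffixProds hkm) (mem_closure (by lia))

lemma closure_subset_suffixProds_mul_closure (hs : IsCoxeterTypeA s (n + 1)) :
    (closure (s '' Set.Iio (n + 1)) : Set G) ⊆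
      suffixProds s (n + 1) * (closure (s '' Set.Iio n) : Set G) := by
  have mul_mem (j : ℕ) (hj : j < n + 1) (g : G)
      (hg : g ∈ suffixProds s (n + 1) * (closure (s '' Set.Iio n) : Set G)) :
      s j * g ∈ suffixProds s (n + 1) * (closure (s '' Set.Iio n) : Set G) := by
    obtain ⟨w, hw, h, hh, rfl⟩ := hg
    dsimp only
    rw [← mul_assoc, ← coe_mul_coe (closure (s '' Set.Iio n)), ← mul_assoc]
    exact Set.mul_mem_mul (hs.mul_mem_suffixProds_mul_closure hj hw) hh
  intro g hg
  induction hg using closure_induction_left with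
  | one =>
    exact ⟨1, one_mem_suffixProds _, 1, one_mem (Subgroup.closure _), mul_one 1⟩
  | mul_left x hx g _ ih =>
    obtain ⟨j, hj, rfl⟩ := hx
    exact mul_mem j hj g ih
  | inv_mul_cancel x hx g _ ih =>
    obtain ⟨j, hj, rfl⟩ := hx
    rw [inv_eq_self_of_sq_eq_one (hs.sq_eq_one j hj)]
    exact mul_mem j hj g ih

theorem mk_closure_le_factorial (hs : IsCoxeterTypeA s n) :
    #(closure (s '' Set.Iio n)) ≤ (n + 1)! := by
  induction n with
  | zero => simp
  | succ n ih =>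
    calc #(closure (s '' Set.Iio (n + 1)))
        ≤ #(suffixProds s (n + 1) * (closure (s '' Set.Iio n) : Set G) : Set G) :=
          Cardinal.mk_le_mk_of_subset hs.closure_subset_suffixProds_mul_closure
      _ ≤ #(suffixProds s (n + 1)) * #(closure (s '' Set.Iio n)) := Cardinal.mk_mul_le
      _ ≤ (n + 2 : ℕ) * (n + 1)! := by
        gcongr
        · exact mk_suffixProds_le s (n + 1)
        · exact ih hs.of_succ
      _ = (n + 2)! := by rw [Nat.factorial_succ (n + 1), Nat.cast_mul]

end IsCoxeterTypeA

section AdjacentTranspositions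

variable {G : Type*} [Group G] {n : ℕ} {f : G →* Perm (Fin (n + 1))} {s : ℕ → G}

lemma surjective_of_map_eq_swap (hf : ∀ i : Fin n, f (s i) = swap i.castSucc i.succ) :
    Function.Surjective f := by
  rw [← MonoidHom.range_eq_top, eq_top_iff,
    ← closure_eq_top_of_mclosure_eq_top (Perm.mclosure_swap_castSucc_succ n), closure_le]
  rintro _ ⟨i, rfl⟩
  exact ⟨s i, hf i⟩

theorem IsCoxeterTypeA.bijective_of_map_eq_swap (hs : IsCoxeterTypeA s n)
    (hgen : closure (s '' Set.Iio n) = ⊤)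
    (hf : ∀ i : Fin n, f (s i) = swap i.castSucc i.succ) : Function.Bijective f := by
  have card_le : #G ≤ (n + 1)! := by
    rw [← topEquiv.toEquiv.cardinal_eq, ← hgen]
    exact hs.mk_closure_le_factorial
  have : Finite G := Cardinal.lt_aleph0_iff_finite.1 (card_le.trans_lt Cardinal.natCast_lt_aleph0)
  refine (surjective_of_map_eq_swap hf).bijective_of_nat_card_le ?_
  rw [Nat.card_perm, Nat.card_fin]
  exact_mod_cast (Nat.cast_card (α := G)).trans_le card_le

end AdjacentTranspositions

section R33

/-- The images of `a`, `b`, `c` in the presented group, as the terms `0`, `1`, `2` of a sequence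
indexed by `ℕ`; later indices are reduced modulo `3`. -/
def gen33 (i : ℕ) : PresentedGroup rels33 := PresentedGroup.of (Fin.ofNat 3 i)

lemma isCoxeterTypeA_gen33 : IsCoxeterTypeA gen33 3 where
  sq_eq_one i hi := by
    interval_cases i
    · exact PresentedGroup.one_of_mem (x := a ^ 2) (by simp [rels33])
    · exact PresentedGroup.one_of_mem (x := b ^ 2) (by simp [rels33])
    · exact PresentedGroup.one_of_mem (x := c ^ 2) (by simp [rels33])
  mul_succ_pow_three_eq_one i hi := by
    obtain rfl | rfl : i = 0 ∨ i = 1 := by lia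
    · exact PresentedGroup.one_of_mem (x := (a * b) ^ 3) (by simp [rels33])
    · exact PresentedGroup.one_of_mem (x := (b * c) ^ 3) (by simp [rels33])
  mul_sq_eq_one i j hij hj := by
    obtain ⟨rfl, rfl⟩ : i = 0 ∧ j = 2 := by lia
    exact PresentedGroup.one_of_mem (x := (a * c) ^ 2) (by simp [rels33])

lemma closure_gen33_eq_top : closure (gen33 '' Set.Iio 3) = ⊤ := by
  rw [eq_top_iff, ← PresentedGroup.closure_range_of]
  refine closure_mono ?_
  rintro _ ⟨i, rfl⟩
  exact ⟨i, i.isLt, by rw [gen33, Fin.ofNat_val_eq_self]⟩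

lemma lift_swap_eq_one_of_mem_rels33 :
    ∀ r ∈ rels33, FreeGroup.lift (fun i : Fin 3 ↦ swap i.castSucc i.succ) r = 1 := by
  simp only [rels33, a, b, c, Set.forall_mem_insert, Set.mem_singleton_iff, forall_eq, map_pow,
    map_mul, FreeGroup.lift_apply_of]
  decide

end R33

/-- The presented group `⟨a, b, c | a², b², c², (ab)³, (ac)², (bc)³⟩` is isomorphic to the
symmetric group `S₄`. -/
theorem presentedGroup_R33_iso_s4 :
    Nonempty (PresentedGroup rels33 ≃* Equiv.Perm (Fin 4)) := by
  have map_gen33 (i : Fin 3) :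
      PresentedGroup.toGroup lift_swap_eq_one_of_mem_rels33 (gen33 i) =
        swap i.castSucc i.succ := by
    rw [gen33, Fin.ofNat_val_eq_self, PresentedGroup.toGroup.of]
  exact ⟨MulEquiv.ofBijective _
    (isCoxeterTypeA_gen33.bijective_of_map_eq_swap closure_gen33_eq_top map_gen33)⟩

end Stmt15
end
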